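/- arXiv:2305.05045 — 2 statements merged into one kernel-verified Lean document; each statement's English description precedes it below -/
import Mathlib

section
/- Every connected graph G on n ≥ 2 vertices satisfies Gal(G) ≤ 5·n^{2/3}, i.e., there is a set of at most 5·n^{2/3} vertices that meets every longest path of G. -/
namespace GallaiNumber

section Lists

variable {V : Type*}

lemma exists_first {l : List V} {P : V → Prop} (h : ∃ x ∈ l, P x) :
    ∃ l₁ x l₂, l = l₁ ++ x :: l₂ ∧ P x ∧ ∀ y ∈ l₁, ¬ P y := by
  induction l with
  | nil => simp at h
  | cons a t ih =>
    by_cases ha : P a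
    · exact ⟨[], a, t, rfl, ha, by simp⟩
    · obtain ⟨l₁, x, l₂, rfl, hx, hy⟩ := ih (by grind)
      exact ⟨a :: l₁, x, l₂, rfl, hx, by grind⟩

lemma exists_last {l : List V} {P : V → Prop} (h : ∃ x ∈ l, P x) :
    ∃ l₁ x l₂, l = l₁ ++ x :: l₂ ∧ P x ∧ ∀ y ∈ l₂, ¬ P y := by
  obtain ⟨l₁, x, l₂, hl, hx, hy⟩ := exists_first (l := l.reverse) (P := P) (by simpa using h)
  exact ⟨l₂.reverse, x, l₁.reverse, by simpa using congrArg List.reverse hl, hx, by simpa using hy⟩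

lemma length_le_of_nodup_subset {l m : List V} (hl : l.Nodup) (h : l ⊆ m) :
    l.length ≤ m.length :=
  (List.subperm_of_subset hl h).length_le

end Lists

section Routes

variable {V : Type*} {G : SimpleGraph V}

/-- A list of vertices forms a path when consecutive entries are adjacent and none repeats. -/
def IsListPath (G : SimpleGraph V) (l : List V) : Prop :=
  l.IsChain G.Adj ∧ l.Nodup

/-- A path of maximum number of vertices. -/
def IsLongest (G : SimpleGraph V) (l : List V) : Prop :=
  IsListPath G l ∧ ∀ m, IsListPath G m → m.length ≤ l.length

lemma IsListPath.reverse {l : List V} (h : IsListPath G l) : IsListPath G l.reverse := by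
  refine ⟨?_, List.nodup_reverse.2 h.2⟩
  rw [List.isChain_reverse]
  exact h.1.imp fun _ _ hab => hab.symm

lemma isChain_reverse_adj {l : List V} (h : l.IsChain G.Adj) : l.reverse.IsChain G.Adj := by
  rw [List.isChain_reverse]
  exact h.imp fun _ _ hab => hab.symm

lemma isChain_segment {l m : List V} (h : l.IsChain G.Adj) (hm : m <:+: l) :
    m.IsChain G.Adj := by
  obtain ⟨p, q, rfl⟩ := hm
  exact h.left_of_append.right_of_append

/-- Gluing two chains that share an end vertex. -/
lemma isChain_glue {l₁ l₂ : List V} {x : V} (h₁ : (l₁ ++ [x]).IsChain G.Adj)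
    (h₂ : (x :: l₂).IsChain G.Adj) : (l₁ ++ x :: l₂).IsChain G.Adj :=
  List.isChain_split.2 ⟨h₁, h₂⟩

/-- A route from `x` to `y` is a walk from `x` to `y`, listed by its vertices. -/
def Route (G : SimpleGraph V) (x y : V) (l : List V) : Prop :=
  l.IsChain G.Adj ∧ l.head? = some x ∧ l.getLast? = some y

lemma Route.mem_left {x y : V} {l : List V} (h : Route G x y l) : x ∈ l :=
  List.mem_of_mem_head? h.2.1

lemma Route.mem_right {x y : V} {l : List V} (h : Route G x y l) : y ∈ l :=
  List.mem_of_getLast? h.2.2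

lemma Route.symm {x y : V} {l : List V} (h : Route G x y l) : Route G y x l.reverse :=
  ⟨isChain_reverse_adj h.1, by simpa using h.2.2, by simpa using h.2.1⟩

lemma Route.trans {x y z : V} {l m : List V} (hl : Route G x y l) (hm : Route G y z m) :
    ∃ w, Route G x z w ∧ ∀ v ∈ w, v ∈ l ∨ v ∈ m := by
  obtain ⟨hl, hx, hy⟩ := hl
  obtain ⟨hm, hy', hz⟩ := hm
  obtain ⟨l', rfl⟩ := List.getLast?_eq_some_iff.1 hy
  obtain ⟨m', rfl⟩ := List.head?_eq_some_iff.1 hy'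
  refine ⟨l' ++ y :: m', ⟨isChain_glue hl hm, ?_, ?_⟩, ?_⟩
  · cases l' <;> simp_all
  · simpa [List.getLast?_append] using hz
  · simp; tauto

lemma route_of_mem {l : List V} (h : l.IsChain G.Adj) {x y : V} (hx : x ∈ l) (hy : y ∈ l) :
    ∃ m, m ⊆ l ∧ Route G x y m := by
  obtain ⟨a, b, rfl⟩ := List.append_of_mem hx
  rcases List.mem_append.1 hy with hy | hy
  · obtain ⟨p, q, rfl⟩ := List.append_of_mem hy
    have h1 : ((y :: q) ++ [x]).IsChain G.Adj := by
      have := (List.isChain_split.1 h).1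
      rw [List.append_assoc] at this
      exact this.right_of_append
    have h2 : Route G y x ((y :: q) ++ [x]) := ⟨h1, by simp, List.getLast?_concat⟩
    exact ⟨_, by intro v; simp; tauto, h2.symm⟩
  · obtain ⟨p, q, hpq⟩ := List.append_of_mem hy
    refine ⟨p ++ [y], ?_, ?_, ?_, by simp⟩
    · intro v hv
      have : v ∈ x :: b := by rw [hpq]; simp at hv ⊢; tauto
      simp at this ⊢; tauto
    · have h1 := h.right_of_append
      rw [hpq] at h1
      exact (List.isChain_split.1 h1).1
    · cases p <;> simp_all

lemma Route.exists_nodup {x y : V} {l : List V} (h : Route G x y l) :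
    ∃ m, m ⊆ l ∧ m.Nodup ∧ Route G x y m := by
  induction hn : l.length using Nat.strong_induction_on generalizing l x with
  | _ n ih =>
    obtain ⟨hc, hx, hy⟩ := h
    obtain ⟨t, rfl⟩ := List.head?_eq_some_iff.1 hx
    by_cases hxt : x ∈ t
    · obtain ⟨a, b, rfl⟩ := List.append_of_mem hxt
      obtain ⟨m, h1, h2, h3⟩ := ih (x :: b).length (by simp at hn ⊢; omega) (x := x) (l := x :: b)
        ⟨(hc.tail).right_of_append, by simp, by
          rw [← hy, ← List.cons_append, List.getLast?_append]; simp [List.getLast?_cons]⟩ rfl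
      exact ⟨m, fun v hv => by have := h1 hv; simp at this ⊢; tauto, h2, h3⟩
    · cases t with
      | nil => exact ⟨[x], by simp, by simp, hc, hx, hy⟩
      | cons z t =>
        rw [List.isChain_cons_cons] at hc
        obtain ⟨m, h1, h2, h3⟩ := ih (z :: t).length (by simp at hn ⊢; omega) (x := z) (l := z :: t)
          ⟨hc.2, by simp, by rw [← hy]; simp⟩ rfl
        obtain ⟨m', rfl⟩ := List.head?_eq_some_iff.1 h3.2.1
        refine ⟨x :: z :: m', ?_, ?_, ?_, by simp, ?_⟩
        · exact List.cons_subset_cons _ h1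
        · exact List.nodup_cons.2 ⟨fun hx' => hxt (h1 hx'), h2⟩
        · exact List.isChain_cons_cons.2 ⟨hc.1, h3.1⟩
        · rw [← h3.2.2]; simp

/-- A walk meeting two disjoint vertex sets contains a path between them with interior outside
both. -/
lemma exists_clean {l : List V} {A B : V → Prop} (hl : l.IsChain G.Adj)
    (hA : ∃ x ∈ l, A x) (hB : ∃ x ∈ l, B x) (hAB : ∀ x, A x → ¬ B x) :
    ∃ a R b, A a ∧ B b ∧ IsListPath G (a :: (R ++ [b])) ∧ (a :: (R ++ [b])) ⊆ l ∧
      ∀ v ∈ R, ¬ A v ∧ ¬ B v := by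
  obtain ⟨x, hx, hAx⟩ := hA
  obtain ⟨y, hy, hBy⟩ := hB
  obtain ⟨m, hm, hr⟩ := route_of_mem hl hx hy
  obtain ⟨m', hm', hnd, hr'⟩ := hr.exists_nodup
  obtain ⟨p, a, q, rfl, ha, hq⟩ := exists_last ⟨x, hr'.mem_left, hAx⟩
  have hyq : y ∈ q := by
    have h2 := hr'.2.2
    obtain ⟨q', hq'⟩ := List.getLast?_eq_some_iff.1 h2
    rcases List.eq_nil_or_concat q with rfl | ⟨q'', z, rfl⟩
    · have := List.append_inj_right' hq' rfl
      simp at this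
      subst this
      exact absurd hBy (hAB _ ha)
    · rw [List.concat_eq_append, ← List.cons_append, ← List.append_assoc] at hq'
      have := List.append_inj_right' hq' rfl
      simp at this
      simp [this]
  obtain ⟨R, b, q', rfl, hb, hR⟩ := exists_first ⟨y, hyq, hBy⟩
  have hsub : (a :: (R ++ [b])) <:+: p ++ a :: (R ++ b :: q') := ⟨p, q', by simp⟩
  refine ⟨a, R, b, ha, hb, ⟨isChain_segment hr'.1 hsub, hnd.sublist hsub.sublist⟩, ?_, ?_⟩
  · exact fun v hv => hm (hm' (hsub.subset hv))
  · exact fun v hv => ⟨hq v (by simp [hv]), hR v hv⟩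

lemma IsListPath.exists_half {l : List V} (h : IsListPath G l) {x : V} (hx : x ∈ l) :
    ∃ t, IsListPath G (x :: t) ∧ x :: t ⊆ l ∧ l.length + 1 ≤ 2 * (x :: t).length := by
  obtain ⟨a, b, rfl⟩ := List.append_of_mem hx
  rcases le_total a.length b.length with hab | hab
  · have hsub : (x :: b) <:+: a ++ x :: b := ⟨a, [], by simp⟩
    exact ⟨b, ⟨isChain_segment h.1 hsub, h.2.sublist hsub.sublist⟩, hsub.subset, by simp; omega⟩
  · have hsub : (a ++ [x]) <:+: a ++ x :: b := ⟨[], b, by simp⟩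
    have h' : IsListPath G (a ++ [x]) := ⟨isChain_segment h.1 hsub, h.2.sublist hsub.sublist⟩
    refine ⟨a.reverse, by simpa using h'.reverse, ?_, by simp; omega⟩
    intro v hv
    apply hsub.subset
    simp at hv ⊢; tauto

lemma exists_walk_list (hG : G.Connected) (x y : V) : ∃ l, Route G x y l := by
  obtain ⟨p⟩ := hG.preconnected x y
  refine ⟨p.support, p.isChain_adj_support, ?_, ?_⟩
  · rw [List.head?_eq_some_head p.support_ne_nil]; simp
  · rw [List.getLast?_eq_some_getLast p.support_ne_nil]; simp

lemma IsLongest.ne_nil [Nonempty V] {l : List V} (h : IsLongest G l) : l ≠ [] := by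
  rintro rfl
  have := h.2 [Classical.arbitrary V] ⟨by simp, by simp⟩
  simp at this

/-- In a connected graph any two longest paths share a vertex. -/
lemma IsLongest.inter (hG : G.Connected) {l m : List V} (hl : IsLongest G l)
    (hm : IsLongest G m) : ∃ x ∈ l, x ∈ m := by
  have := hG.nonempty
  by_contra! hdis
  obtain ⟨x, hx⟩ := List.exists_mem_of_ne_nil l hl.ne_nil
  obtain ⟨y, hy⟩ := List.exists_mem_of_ne_nil m hm.ne_nil
  obtain ⟨w, hw⟩ := exists_walk_list hG x y
  obtain ⟨a, R, b, ha, hb, hp, -, hR⟩ := exists_clean (A := (· ∈ l)) (B := (· ∈ m)) hw.1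
    ⟨x, hw.mem_left, hx⟩ ⟨y, hw.mem_right, hy⟩ hdis
  obtain ⟨s, hs, hsl, hs2⟩ := hl.1.exists_half ha
  obtain ⟨t, ht, htm, ht2⟩ := hm.1.exists_half hb
  have key : IsListPath G (s.reverse ++ (a :: (R ++ (b :: t)))) := by
    constructor
    · refine isChain_glue (by simpa using hs.reverse.1) ?_
      have := isChain_glue (l₁ := a :: R) (x := b) (l₂ := t) (by simpa using hp.1) ht.1
      simpa using this
    · have h1 := hp.2
      have h2 := hs.2
      have h3 := ht.2
      have h4 : ∀ v ∈ s, v ∈ l := fun v hv => hsl (by simp [hv])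
      have h5 : ∀ v ∈ t, v ∈ m := fun v hv => htm (by simp [hv])
      simp only [List.nodup_append, List.nodup_cons, List.nodup_reverse] at *
      grind
  have h1 := hl.2 _ key
  have h2 := hm.2 _ hl.1
  have h3 := hl.2 _ hm.1
  simp at h1 hs2 ht2
  omega

end Routes

section Covers

variable {V : Type*} {G : SimpleGraph V}

/-- Some set of at most `m` vertices meets every longest path that meets `A`. -/
def Cov (G : SimpleGraph V) (A : Set V) (m : ℕ) : Prop :=
  ∃ X : Finset V, X.card ≤ m ∧ ∀ Q, IsLongest G Q → (∃ v ∈ Q, v ∈ A) → ∃ v ∈ Q, v ∈ X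

lemma Cov.mono {A B : Set V} {m k : ℕ} (h : Cov G A m) (hBA : B ⊆ A) (hmk : m ≤ k) :
    Cov G B k := by
  obtain ⟨X, hX, h⟩ := h
  exact ⟨X, hX.trans hmk, fun Q hQ ⟨v, hv, hvB⟩ => h Q hQ ⟨v, hv, hBA hvB⟩⟩

lemma Cov.union {A B : Set V} {m k : ℕ} (hA : Cov G A m) (hB : Cov G B k) :
    Cov G (A ∪ B) (m + k) := by
  classical
  obtain ⟨X, hX, hA⟩ := hA
  obtain ⟨Y, hY, hB⟩ := hB
  refine ⟨X ∪ Y, (Finset.card_union_le X Y).trans (by omega), ?_⟩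
  rintro Q hQ ⟨v, hv, hvA | hvB⟩
  · obtain ⟨u, hu, huX⟩ := hA Q hQ ⟨v, hv, hvA⟩
    exact ⟨u, hu, Finset.mem_union_left _ huX⟩
  · obtain ⟨u, hu, huY⟩ := hB Q hQ ⟨v, hv, hvB⟩
    exact ⟨u, hu, Finset.mem_union_right _ huY⟩

lemma cov_list (l : List V) : Cov G {v | v ∈ l} l.length := by
  classical
  exact ⟨l.toFinset, l.toFinset_card_le, fun Q _ ⟨v, hv, hvl⟩ => ⟨v, hv, by simpa using hvl⟩⟩

lemma exists_prefix_cov {l : List V} {m : ℕ} (h : ¬ Cov G {v | v ∈ l} m) :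
    ∃ l₁ l₂, l = l₁ ++ l₂ ∧ ¬ Cov G {v | v ∈ l₁} m ∧ Cov G {v | v ∈ l₁} (m + 1) := by
  induction l using List.reverseRecOn with
  | nil => exact absurd ((cov_list (G := G) []).mono subset_rfl (Nat.zero_le m)) h
  | append_singleton t x ih =>
    by_cases ht : Cov G {v | v ∈ t} m
    · refine ⟨t ++ [x], [], by simp, h, (ht.union (cov_list [x])).mono ?_ le_rfl⟩
      intro v hv
      simpa [or_comm] using hv
    · obtain ⟨l₁, l₂, rfl, h1, h2⟩ := ih ht
      exact ⟨l₁, l₂ ++ [x], by simp, h1, h2⟩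

lemma exists_suffix_cov {l : List V} {m : ℕ} (h : ¬ Cov G {v | v ∈ l} m) :
    ∃ l₁ l₂, l = l₁ ++ l₂ ∧ ¬ Cov G {v | v ∈ l₂} m ∧ Cov G {v | v ∈ l₂} (m + 1) := by
  obtain ⟨l₁, l₂, hl, h1, h2⟩ := exists_prefix_cov (G := G) (l := l.reverse) (m := m)
    (by simpa using h)
  exact ⟨l₂.reverse, l₁.reverse, by simpa using congrArg List.reverse hl, by simpa using h1,
    by simpa using h2⟩

/-- If `k` vertices are always needed to separate `L` from `A` outside `B`, then some route from
`L` to `A` outside `B` is short. -/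
lemma exists_short_route [Fintype V] {L A B : Set V} {k t : ℕ} (hk : Fintype.card V < k * t)
    (h : ∀ X : Finset V, X.card < k → ∃ l : List V, l.IsChain G.Adj ∧
      (∀ v ∈ l, v ∉ B ∧ v ∉ X) ∧ (∃ v ∈ l, v ∈ L) ∧ ∃ v ∈ l, v ∈ A) :
    ∃ u ∈ L, ∃ v ∈ A, ∃ l, Route G u v l ∧ (∀ w ∈ l, w ∉ B) ∧ l.length ≤ t + 1 := by
  classical
  let S : ℕ → Finset V := fun i => {v | ∃ u ∈ L, ∃ l, Route G u v l ∧ (∀ w ∈ l, w ∉ B) ∧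
    l.length ≤ i + 1}
  have hS : ∀ i v, v ∈ S i ↔ ∃ u ∈ L, ∃ l, Route G u v l ∧ (∀ w ∈ l, w ∉ B) ∧
    l.length ≤ i + 1 := by simp [S]
  by_contra hno
  have key : ∀ i ≤ t, k * i ≤ (S i).card := by
    intro i
    induction i with
    | zero => simp
    | succ i ih =>
      intro hi
      specialize ih (by omega)
      have hsub : S i ⊆ S (i + 1) := by
        intro v hv
        rw [hS] at hv ⊢
        obtain ⟨u, hu, l, h1, h2, h3⟩ := hv
        exact ⟨u, hu, l, h1, h2, by omega⟩
      have hcard := Finset.card_sdiff_add_card_eq_card hsub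
      by_contra hlt
      obtain ⟨l, hl, havoid, ⟨u, hul, huL⟩, ⟨w, hwl, hwA⟩⟩ := h (S (i + 1) \ S i) (by
        rw [Nat.mul_succ] at hlt; omega)
      obtain ⟨m, hml, hm⟩ := route_of_mem hl hul hwl
      have hw : w ∉ S i := by
        intro hw
        rw [hS] at hw
        obtain ⟨u', hu', l', h1, h2, h3⟩ := hw
        exact hno ⟨u', hu', w, hwA, l', h1, h2, by omega⟩
      have hu : u ∈ S i := (hS _ _).2 ⟨u, huL, [u], ⟨by simp, by simp, by simp⟩,
        by simpa using (havoid u hul).1, by simp⟩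
      obtain ⟨p, z, q, rfl, hz, hp⟩ := exists_first (P := (· ∉ S i)) ⟨w, hm.mem_right, hw⟩
      simp only [not_not] at hp
      rcases List.eq_nil_or_concat p with rfl | ⟨p', y, rfl⟩
      · have := hm.2.1
        simp at this
        exact hz (this ▸ hu)
      · rw [List.concat_eq_append] at hp hm hml
        have hy := hp y (by simp)
        have hyz : G.Adj y z := by
          have := hm.1
          rw [List.append_assoc] at this
          exact (List.isChain_append_cons_cons.1 this).2.1
        rw [hS] at hy
        obtain ⟨u', hu', l', ⟨h1, h1', h1''⟩, h2, h3⟩ := hy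
        have hzl : z ∈ l := hml (by simp)
        refine (havoid z hzl).2 (Finset.mem_sdiff.2 ⟨?_, hz⟩)
        rw [hS]
        obtain ⟨l'', rfl⟩ := List.getLast?_eq_some_iff.1 h1''
        refine ⟨u', hu', (l'' ++ [y]) ++ [z], ⟨?_, ?_, List.getLast?_concat⟩, ?_, ?_⟩
        · rw [List.append_assoc]
          exact isChain_glue h1 (by simpa using hyz)
        · rw [List.head?_append, h1']; rfl
        · have := (havoid z hzl).1
          grind
        · simp at h3 ⊢; omega
  have h1 := key t le_rfl
  have h2 := (S t).card_le_univ
  omega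

end Covers

section Cycles

variable {V : Type*} {G : SimpleGraph V}

/-- Two vertices of a cycle are joined by an arc with at least half of its vertices. -/
lemma exists_long_arc {x : V} {w : List V} (hc : (x :: (w ++ [x])).IsChain G.Adj)
    (hn : (x :: w).Nodup) {c₁ c₂ : V} (h₁ : c₁ ∈ x :: w) (h₂ : c₂ ∈ x :: w) (h₁₂ : c₁ ≠ c₂) :
    ∃ v, IsListPath G (c₁ :: (v ++ [c₂])) ∧ c₁ :: (v ++ [c₂]) ⊆ x :: w ∧
      (x :: w).length ≤ 2 * v.length + 2 := by
  have main : ∀ a b p q r, x :: w = p ++ a :: (q ++ b :: r) →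
      ∃ v, IsListPath G (a :: (v ++ [b])) ∧ a :: (v ++ [b]) ⊆ x :: w ∧
        (x :: w).length ≤ 2 * v.length + 2 := by
    intro a b p q r h
    have hlen := congrArg List.length h
    have hc' : (p ++ a :: (q ++ b :: r) ++ [x]).IsChain G.Adj := by
      rw [← h]; simpa using hc
    rcases le_total (p.length + r.length) q.length with hle | hle
    · have hsub : (a :: (q ++ [b])) <:+: x :: w := ⟨p, r, by simp [h]⟩
      have hchain : (a :: (q ++ [b])).IsChain G.Adj :=
        isChain_segment hc' ⟨p, r ++ [x], by simp⟩
      exact ⟨q, ⟨hchain, hn.sublist hsub.sublist⟩, hsub.subset, by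
        simp at hlen ⊢; omega⟩
    · have hchain : (b :: (r ++ (p ++ [a]))).IsChain G.Adj := by
        have h1 : (b :: r ++ [x]).IsChain G.Adj := isChain_segment hc' ⟨p ++ a :: q, [], by simp⟩
        cases p with
        | nil => simp at h; simpa [h.1] using h1
        | cons y p =>
          simp at h
          have h2 : (y :: (p ++ [a])).IsChain G.Adj :=
            isChain_segment hc' ⟨[], q ++ b :: r ++ [x], by simp⟩
          rw [h.1] at h1
          have := isChain_glue h1 h2
          simpa using this
      have hnd : (b :: (r ++ (p ++ [a]))).Nodup := by
        rw [h] at hn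
        refine (hn.sublist (l₁ := p ++ a :: (b :: r)) ?_).perm ?_
        · simp
        · rw [← List.singleton_append, ← List.append_assoc, ← List.cons_append]
          simpa using (List.perm_append_comm (l₁ := p ++ [a]) (l₂ := b :: r))
      have hp : IsListPath G (b :: (r ++ (p ++ [a]))) := ⟨hchain, hnd⟩
      refine ⟨(r ++ p).reverse, by simpa using hp.reverse, ?_, by simp at hlen ⊢; omega⟩
      rw [h]
      intro z hz
      simp at hz ⊢
      tauto
  obtain ⟨p, q, hpq⟩ := List.append_of_mem h₁
  have h₂' := h₂
  rw [hpq] at h₂'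
  rcases List.mem_append.1 h₂' with h | h
  · obtain ⟨p', q', rfl⟩ := List.append_of_mem h
    obtain ⟨v, hv, hv', hv''⟩ := main c₂ c₁ p' q' q (by simpa using hpq)
    refine ⟨v.reverse, by simpa using hv.reverse, ?_, by simpa using hv''⟩
    intro z hz
    apply hv'
    simp at hz ⊢
    tauto
  · obtain ⟨p', q', rfl⟩ := List.append_of_mem (by simpa [h₁₂.symm] using h : c₂ ∈ q)
    exact main c₁ c₂ p p' q' hpq

end Cycles

section Menger

variable {V : Type*} {G : SimpleGraph V} {D A B C : Set V}

/-- `b :: s` is a path inside `D` from `b ∈ B` to a vertex of `A` that leaves `B` at once. -/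
structure Link (G : SimpleGraph V) (D A B : Set V) (b : V) (s : List V) : Prop where
  path : IsListPath G (b :: s)
  mem_left : b ∈ B
  tail_notMem : ∀ v ∈ s, v ∉ B
  last : ∃ a ∈ A, (b :: s).getLast? = some a
  mem_region : ∀ v ∈ b :: s, v ∈ D

lemma exists_link {l : List V} (hl : l.IsChain G.Adj) (hD : ∀ v ∈ l, v ∈ D)
    (hA : ∃ v ∈ l, v ∈ A) (hB : ∃ v ∈ l, v ∈ B) :
    ∃ b s, Link G D A B b s ∧ b :: s ⊆ l := by
  obtain ⟨a, ha, haA⟩ := hA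
  obtain ⟨b, hb, hbB⟩ := hB
  obtain ⟨m, hm, hr⟩ := route_of_mem hl hb ha
  obtain ⟨m', hm', hnd, hr'⟩ := hr.exists_nodup
  obtain ⟨p, c, q, rfl, hc, hq⟩ := exists_last (P := (· ∈ B)) ⟨b, hr'.mem_left, hbB⟩
  have hsub : c :: q ⊆ p ++ c :: q := List.subset_append_right _ _
  refine ⟨c, q, ⟨⟨hr'.1.right_of_append, hnd.of_append_right⟩, hc, hq, ⟨a, haA, ?_⟩, ?_⟩, ?_⟩
  · rw [← hr'.2.2, List.getLast?_append]
    simp [List.getLast?_cons]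
  · exact fun v hv => hD v (hm (hm' (hsub hv)))
  · exact fun v hv => hm (hm' (hsub hv))

/-- A link from `C ⊇ B` starting on a path inside `C` that leaves `B` at once yields a link
from `B`. -/
lemma Link.extend {c y : V} {p s : List V} (h : Link G D A C y s) (hBC : B ⊆ C)
    (hp : IsListPath G (c :: p)) (hpC : ∀ v ∈ c :: p, v ∈ C) (hpD : ∀ v ∈ c :: p, v ∈ D)
    (hc : c ∈ B) (hpB : ∀ v ∈ p, v ∉ B) (hy : y ∈ c :: p) :
    ∃ s', Link G D A B c s' ∧ ∀ v ∈ c :: s', v ∈ c :: p ∨ v ∈ s := by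
  obtain ⟨q₁, q₂, hq⟩ := List.append_of_mem hy
  have hs : ∀ v ∈ s, v ∉ B := fun v hv hvB => h.tail_notMem v hv (hBC hvB)
  have hchain : (q₁ ++ y :: s).IsChain G.Adj := by
    refine isChain_glue ?_ h.path.1
    have := hp.1
    rw [hq] at this
    exact (List.isChain_split.1 this).1
  have hnd : (q₁ ++ y :: s).Nodup := by
    have h1 := hp.2
    have h2 := h.path.2
    have h3 := h.tail_notMem
    rw [hq] at h1 hpC
    simp only [List.nodup_append, List.nodup_cons] at *
    grind
  have hD : ∀ v ∈ q₁ ++ y :: s, v ∈ D := by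
    have := h.mem_region
    grind
  obtain ⟨a, ha, hlast⟩ := h.last
  have hlast' : (q₁ ++ y :: s).getLast? = some a := by
    rw [List.getLast?_append, hlast]; rfl
  cases q₁ with
  | nil =>
    simp only [List.nil_append, List.cons.injEq] at hq
    obtain ⟨rfl, rfl⟩ := hq
    exact ⟨s, ⟨⟨hchain, hnd⟩, hc, hs, ⟨a, ha, hlast'⟩, hD⟩, by grind⟩
  | cons d q₁ =>
    simp only [List.cons_append, List.cons.injEq] at hq
    obtain ⟨rfl, rfl⟩ := hq
    exact ⟨q₁ ++ y :: s, ⟨⟨hchain, hnd⟩, hc, by grind, ⟨a, ha, hlast'⟩, hD⟩, by grind⟩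

/-- Menger's theorem for two paths. -/
lemma Link.exists_two [Finite V] {b : V} {s : List V} (h : Link G D A B b s)
    (hsep : ∀ z, ∃ l : List V, l.IsChain G.Adj ∧ (∀ v ∈ l, v ∈ D) ∧ z ∉ l ∧ (∃ v ∈ l, v ∈ A) ∧
      ∃ v ∈ l, v ∈ B) :
    ∃ b' s₁ s₂, Link G D A B b s₁ ∧ Link G D A B b' s₂ ∧ (b :: s₁).Disjoint (b' :: s₂) := by
  induction hn : Bᶜ.ncard using Nat.strong_induction_on generalizing B b s with
  | _ n ih =>
    obtain ⟨l, hl, hlD, hbl, hlA, hlB⟩ := hsep b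
    obtain ⟨r, t, hR, hRl⟩ := exists_link hl hlD hlA hlB
    by_cases hdis : ∃ v ∈ r :: t, v ∈ b :: s
    swap
    · refine ⟨r, s, t, h, hR, ?_⟩
      intro v hv hv'
      exact hdis ⟨v, hv', hv⟩
    obtain ⟨t₁, x, t₂, ht, hx, ht₁⟩ := exists_first hdis
    have hxb : x ≠ b := by
      rintro rfl
      exact hbl (hRl (by simp [ht]))
    have hxs : x ∈ s := by simpa [hxb] using hx
    have hxB : x ∉ B := h.tail_notMem x hxs
    obtain ⟨p₁, p₂, rfl⟩ := List.append_of_mem hxs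
    obtain _ | ⟨r', t₁⟩ := t₁
    · simp only [List.nil_append, List.cons.injEq] at ht
      exact absurd (ht.1 ▸ hR.mem_left) hxB
    simp only [List.cons_append, List.cons.injEq] at ht
    obtain ⟨rfl, rfl⟩ := ht
    let C : Set V := B ∪ {v | v ∈ p₁ ∨ v = x ∨ v ∈ r :: t₁}
    have hBC : B ⊆ C := Set.subset_union_left
    have hC : ∀ v, v ∈ C ↔ v ∈ B ∨ v ∈ p₁ ∨ v = x ∨ v ∈ r :: t₁ := fun v => Iff.rfl
    have hP := h.path
    have hPB := h.tail_notMem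
    have hPD := h.mem_region
    have hRP := hR.path
    have hRB := hR.tail_notMem
    have hRD := hR.mem_region
    have hbB := h.mem_left
    have hrB := hR.mem_left
    have hlink : Link G D A C x p₂ := by
      refine ⟨⟨(hP.1.tail).right_of_append, hP.2.tail.of_append_right⟩, by simp [hC], ?_, ?_, ?_⟩
      · have h1 := hP.2
        simp only [List.nodup_append, List.nodup_cons] at h1
        grind
      · obtain ⟨a, ha, hlast⟩ := h.last
        refine ⟨a, ha, ?_⟩
        rw [← hlast, ← List.cons_append, List.getLast?_append]
        simp [List.getLast?_cons]
      · grind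
    have hcard : Cᶜ.ncard < n := by
      rw [← hn]
      refine Set.ncard_lt_ncard ?_ (Set.toFinite _)
      exact ⟨Set.compl_subset_compl.2 hBC, fun hsub => hsub hxB ((hC x).2 (by simp))⟩
    obtain ⟨y, s₁, s₂, hs₁, hs₂, hd⟩ := ih _ hcard hlink (fun z => by
      obtain ⟨l, h1, h2, h3, h4, v, h5, h6⟩ := hsep z
      exact ⟨l, h1, h2, h3, h4, v, h5, hBC h6⟩) rfl
    have hs₁C := hs₁.tail_notMem
    have hs₂C := hs₂.tail_notMem
    have hPx : IsListPath G (b :: (p₁ ++ [x])) := by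
      have hsub : (b :: (p₁ ++ [x])) <:+: b :: (p₁ ++ x :: p₂) := ⟨[], p₂, by simp⟩
      exact ⟨isChain_segment hP.1 hsub, hP.2.sublist hsub.sublist⟩
    have hPp : IsListPath G (b :: p₁) := by
      have hsub : (b :: p₁) <:+: b :: (p₁ ++ x :: p₂) := ⟨[], x :: p₂, by simp⟩
      exact ⟨isChain_segment hP.1 hsub, hP.2.sublist hsub.sublist⟩
    have hRx : IsListPath G (r :: (t₁ ++ [x])) := by
      have hsub : (r :: (t₁ ++ [x])) <:+: r :: (t₁ ++ x :: t₂) := ⟨[], t₂, by simp⟩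
      exact ⟨isChain_segment hRP.1 hsub, hRP.2.sublist hsub.sublist⟩
    have hRt : IsListPath G (r :: t₁) := by
      have hsub : (r :: t₁) <:+: r :: (t₁ ++ x :: t₂) := ⟨[], x :: t₂, by simp⟩
      exact ⟨isChain_segment hRP.1 hsub, hRP.2.sublist hsub.sublist⟩
    have hxp : x ∉ p₁ := by
      have h1 := hP.2
      simp only [List.nodup_append, List.nodup_cons] at h1
      grind
    by_cases hyp : y ∈ b :: p₁
    · obtain ⟨u₁, hu₁, hu₁'⟩ := hs₂.extend hBC hPp (by grind) (by grind) hbB (by grind) hyp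
      obtain ⟨u₂, hu₂, hu₂'⟩ := hs₁.extend hBC hRx (by grind) (by grind) hrB (by grind) (by simp)
      refine ⟨r, u₁, u₂, hu₁, hu₂, ?_⟩
      intro v h1 h2
      have h3 := @hd v
      specialize hu₁' v h1
      specialize hu₂' v h2
      grind
    · obtain ⟨u₁, hu₁, hu₁'⟩ := hs₁.extend hBC hPx (by grind) (by grind) hbB (by grind) (by simp)
      by_cases hyr : y ∈ r :: t₁
      · obtain ⟨u₂, hu₂, hu₂'⟩ := hs₂.extend hBC hRt (by grind) (by grind) hrB (by grind) hyr
        refine ⟨r, u₁, u₂, hu₁, hu₂, ?_⟩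
        intro v h1 h2
        have h3 := @hd v
        specialize hu₁' v h1
        specialize hu₂' v h2
        grind
      · have hyx : y ≠ x := fun hyx => hd (a := x) (by simp) (by simp [hyx])
        have hyC := hs₂.mem_left
        have hyB : y ∈ B := by grind
        have hyD := hs₂.mem_region y (by simp)
        obtain ⟨u₂, hu₂, hu₂'⟩ := hs₂.extend (c := y) (p := []) hBC ⟨by simp, by simp⟩
          (by grind) (by grind) hyB (by simp) (by simp)
        refine ⟨y, u₁, u₂, hu₁, hu₂, ?_⟩
        intro v h1 h2
        have h3 := @hd v
        specialize hu₁' v h1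
        specialize hu₂' v h2
        grind

end Menger

section Detours

variable {V : Type*} {G : SimpleGraph V}

lemma IsLongest.length_detour_le {X Y Z W : List V} {j j' : V}
    (h : IsLongest G (X ++ j :: (Y ++ j' :: Z))) (hW : IsListPath G (j :: (W ++ [j'])))
    (hdis : ∀ v ∈ W, v ∉ X ++ j :: (Y ++ j' :: Z)) : W.length ≤ Y.length := by
  have key : IsListPath G (X ++ j :: (W ++ j' :: Z)) := by
    constructor
    · have h1 := (List.isChain_split.1 h.1.1).1
      have h2 : (j' :: Z).IsChain G.Adj := isChain_segment h.1.1 ⟨X ++ j :: Y, [], by simp⟩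
      have := isChain_glue (l₁ := j :: W) (by simpa using hW.1) h2
      exact isChain_glue h1 (by simpa using this)
    · have h1 := h.1.2
      have h2 := hW.2
      simp only [List.nodup_append, List.nodup_cons] at *
      grind
  have := h.2 _ key
  simp at this
  omega

/-- Truncating a link at its first vertex in `J`. -/
lemma Link.truncate {D A B : Set V} {b : V} {s : List V} (h : Link G D A B b s)
    (hAB : ∀ v ∈ A, v ∉ B) :
    ∃ S j, j ∈ A ∧ IsListPath G (b :: (S ++ [j])) ∧ b :: (S ++ [j]) ⊆ b :: s ∧
      ∀ v ∈ S, v ∉ A ∧ v ∉ B ∧ v ∈ D := by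
  obtain ⟨a, ha, hlast⟩ := h.last
  obtain ⟨p, j, q, hs, hj, hp⟩ := exists_first (P := (· ∈ A)) ⟨a, List.mem_of_getLast? hlast, ha⟩
  obtain _ | ⟨b', S⟩ := p
  · simp only [List.nil_append, List.cons.injEq] at hs
    exact absurd h.mem_left (hs.1 ▸ hAB j hj)
  simp only [List.cons_append, List.cons.injEq] at hs
  obtain ⟨rfl, rfl⟩ := hs
  have hsub : (b :: (S ++ [j])) <:+: b :: (S ++ j :: q) := ⟨[], q, by simp⟩
  have h1 := h.tail_notMem
  have h2 := h.mem_region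
  exact ⟨S, j, hj, ⟨isChain_segment h.path.1 hsub, h.path.2.sublist hsub.sublist⟩,
    hsub.subset, by grind⟩

/-- A short segment of a longest path that cannot be separated from a disjoint long cycle by one
vertex could be rerouted through the cycle. -/
lemma IsLongest.exists_separator [Finite V] {x : V} {w Q₁ J Q₂ : List V} {d : ℕ}
    (hc : (x :: (w ++ [x])).IsChain G.Adj) (hn : (x :: w).Nodup) (hd : 2 * d ≤ (x :: w).length)
    (hQ : IsLongest G (Q₁ ++ J ++ Q₂)) (hdis : ∀ v ∈ Q₁ ++ J ++ Q₂, v ∉ x :: w)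
    (hJ : J.length ≤ d) :
    ∃ z, ∀ l : List V, l.IsChain G.Adj → (∀ v ∈ l, v ∈ Q₁ ++ J ++ Q₂ → v ∈ J) →
      (∃ v ∈ l, v ∈ J) → (∃ v ∈ l, v ∈ x :: w) → z ∈ l := by
  by_contra! hsep
  obtain ⟨l, h1, h2, h3, h4, -⟩ := hsep x
  obtain ⟨b, s, hlink, -⟩ := exists_link (D := {v | v ∈ Q₁ ++ J ++ Q₂ → v ∈ J})
    (A := {v | v ∈ J}) (B := {v | v ∈ x :: w}) h1 h2 h3 h4
  obtain ⟨b', s₁, s₂, hl₁, hl₂, hd'⟩ := hlink.exists_two (fun z => by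
    obtain ⟨l, h1, h2, h3, h4, h5⟩ := hsep z
    exact ⟨l, h1, h2, h5, h3, h4⟩)
  have hAB : ∀ v ∈ {v | v ∈ J}, v ∉ {v | v ∈ x :: w} := fun v hv => hdis v (by
    have : v ∈ J := hv
    simp [this])
  obtain ⟨S₁, j₁, hj₁, hp₁, hsub₁, hS₁⟩ := hl₁.truncate hAB
  obtain ⟨S₂, j₂, hj₂, hp₂, hsub₂, hS₂⟩ := hl₂.truncate hAB
  have hd'' : (b :: (S₁ ++ [j₁])).Disjoint (b' :: (S₂ ++ [j₂])) :=
    fun v hv hv' => hd' (hsub₁ hv) (hsub₂ hv')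
  have hbb' : b ≠ b' := fun h => hd'' (a := b) (by simp) (by simp [h])
  have hjj : j₁ ≠ j₂ := fun h => hd'' (a := j₁) (by simp) (by simp [h])
  obtain ⟨v, hv, hvsub, hlen⟩ := exists_long_arc hc hn hl₁.mem_left hl₂.mem_left hbb'
  have hb := hl₁.mem_left
  have hb' := hl₂.mem_left
  simp only [Set.mem_ofPred_eq] at hj₁ hj₂ hS₁ hS₂ hb hb'
  have hW : IsListPath G (j₁ :: ((S₁.reverse ++ b :: (v ++ b' :: S₂)) ++ [j₂])) := by
    constructor
    · have h1 := isChain_glue (l₁ := b :: v) (x := b') (by simpa using hv.1) hp₂.1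
      have h2 := isChain_glue (l₁ := j₁ :: S₁.reverse) (x := b) (by simpa using hp₁.reverse.1) h1
      simpa using h2
    · have h1 := hp₁.2
      have h2 := hp₂.2
      have h3 := hv.2
      have h4 : ∀ u ∈ v, u ∈ x :: w := fun u hu => hvsub (by simp [hu])
      have h5 := hdis j₁ (by simp [hj₁])
      have h6 := hdis j₂ (by simp [hj₂])
      have h7 := fun u => @hd'' u
      have h8 : ∀ u ∈ v, u ∉ S₁ := fun u hu hu' => (hS₁ u hu').2.1 (h4 u hu)
      have h9 : ∀ u ∈ v, u ∉ S₂ := fun u hu hu' => (hS₂ u hu').2.1 (h4 u hu)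
      have h10 : j₁ ∉ v := fun hu => h5 (h4 _ hu)
      have h11 : j₂ ∉ v := fun hu => h6 (h4 _ hu)
      clear hd'' hd' hsep hsub₁ hsub₂ hc hn hQ hdis hvsub hl₁ hl₂ hlink hAB hS₁ hS₂ h4 hp₁ hp₂ hv
      simp only [List.nodup_append, List.nodup_cons, List.nodup_reverse, List.mem_append,
        List.mem_cons, List.mem_reverse] at *
      grind
  have hWdis : ∀ u ∈ S₁.reverse ++ b :: (v ++ b' :: S₂), u ∉ Q₁ ++ J ++ Q₂ := by
    intro u hu huQ
    have h1 := hdis u huQ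
    have h2 : u ∈ b :: (v ++ [b']) → False := fun h => h1 (hvsub h)
    grind
  obtain ⟨p, q, rfl⟩ := List.append_of_mem hj₁
  rcases List.mem_append.1 hj₂ with h | h
  · obtain ⟨p', q', rfl⟩ := List.append_of_mem h
    have e : Q₁ ++ (p' ++ j₂ :: q' ++ j₁ :: q) ++ Q₂ =
      (Q₁ ++ p') ++ j₂ :: (q' ++ j₁ :: (q ++ Q₂)) := by simp
    rw [e] at hQ hWdis
    have := hQ.length_detour_le (W := (S₁.reverse ++ b :: (v ++ b' :: S₂)).reverse)
      (by simpa using hW.reverse) (fun u hu => hWdis u (List.mem_reverse.1 hu))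
    simp at this hJ hlen hd
    omega
  · obtain ⟨p', q', rfl⟩ := List.append_of_mem (by simpa [hjj.symm] using h : j₂ ∈ q)
    have e : Q₁ ++ (p ++ j₁ :: (p' ++ j₂ :: q')) ++ Q₂ =
      (Q₁ ++ p) ++ j₁ :: (p' ++ j₂ :: (q' ++ Q₂)) := by simp
    rw [e] at hQ hWdis
    have := hQ.length_detour_le hW hWdis
    simp at this hJ hlen hd
    omega

/-- A longest path meets every long cycle which fewer than `2 * d` vertices do not cover. -/
lemma IsLongest.meets_cycle [Finite V] (hG : G.Connected) {x : V} {w Q : List V} {d : ℕ}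
    (hc : (x :: (w ++ [x])).IsChain G.Adj) (hn : (x :: w).Nodup) (hd : 2 * d ≤ (x :: w).length)
    (hQ : IsLongest G Q) (hQd : Q.length ≤ d * (2 * d - 1))
    (hcov : ¬ Cov G {v | v ∈ x :: w} (2 * d - 1)) : ∃ v ∈ Q, v ∈ x :: w := by
  classical
  by_contra! hdis
  have hsplit : ∀ i, Q.take (d * i) ++ (Q.drop (d * i)).take d ++ (Q.drop (d * i)).drop d = Q := by
    intro i
    rw [List.append_assoc, List.take_append_drop, List.take_append_drop]
  have hz : ∀ i, ∃ z, ∀ l : List V, l.IsChain G.Adj →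
      (∀ v ∈ l, v ∈ Q → v ∈ (Q.drop (d * i)).take d) →
      (∃ v ∈ l, v ∈ (Q.drop (d * i)).take d) → (∃ v ∈ l, v ∈ x :: w) → z ∈ l := by
    intro i
    have := IsLongest.exists_separator (Q₁ := Q.take (d * i)) (J := (Q.drop (d * i)).take d)
      (Q₂ := (Q.drop (d * i)).drop d) hc hn hd (by rwa [hsplit]) (by rwa [hsplit])
      (List.length_take_le _ _)
    rwa [hsplit] at this
  choose z hz using hz
  refine hcov ⟨(Finset.range (2 * d - 1)).image z, ?_, ?_⟩
  · exact Finset.card_image_le.trans (by simp)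
  rintro Q' hQ' ⟨c, hc', hcc⟩
  obtain ⟨u, huQ', huQ⟩ := hQ'.inter hG hQ
  obtain ⟨a, R, b, ha, hb, hp, hsub, hR⟩ := exists_clean (A := (· ∈ Q)) (B := (· ∈ x :: w))
    hQ'.1.1 ⟨u, huQ', huQ⟩ ⟨c, hc', hcc⟩ hdis
  obtain ⟨m, hm, rfl⟩ := List.mem_iff_getElem.1 ha
  have hd0 : 0 < d := by
    rcases Nat.eq_zero_or_pos d with rfl | h
    · simp at hQd; simp [hQd] at hm
    · exact h
  have hi : m / d < 2 * d - 1 := (Nat.div_lt_iff_lt_mul hd0).2 (by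
    rw [Nat.mul_comm]; exact hm.trans_le hQd)
  have hmem : Q[m] ∈ (Q.drop (d * (m / d))).take d := by
    have h1 := Nat.div_add_mod m d
    have h2 := Nat.mod_lt m hd0
    refine List.mem_iff_getElem.2 ⟨m % d, ?_, ?_⟩
    · simp; omega
    · simp [h1]
  refine ⟨z (m / d), hsub (hz (m / d) _ hp.1 ?_ ⟨_, by simp, hmem⟩ ⟨b, by simp, hb⟩), ?_⟩
  · intro v hv hvQ
    simp only [List.mem_cons, List.mem_append, List.not_mem_nil, or_false] at hv
    rcases hv with rfl | hv | rfl
    · exact hmem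
    · exact absurd hvQ (hR v hv).1
    · exact absurd hb (hdis _ hvQ)
  · exact Finset.mem_image_of_mem _ (Finset.mem_range.2 hi)

end Detours

section Bound

variable {V : Type*} {G : SimpleGraph V}

lemma exists_isLongest [Fintype V] (G : SimpleGraph V) : ∃ l, IsLongest G l := by
  classical
  let p : ℕ → Prop := fun n => ∃ l, IsListPath G l ∧ l.length = n
  have hbdd : ∀ l, IsListPath G l → l.length ≤ Fintype.card V := fun l hl => hl.2.length_le_card
  have h0 : p 0 := ⟨[], ⟨by simp, by simp⟩, rfl⟩
  obtain ⟨l, hl, hlen⟩ := Nat.findGreatest_spec (P := p) (Nat.zero_le (Fintype.card V)) h0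
  refine ⟨l, hl, fun m hm => ?_⟩
  rw [hlen]
  exact Nat.le_findGreatest (hbdd m hm) ⟨m, hm, rfl⟩

lemma exists_isLongest_of_not_cov {A : Set V} {m : ℕ} (h : ¬ Cov G A m) {X : Finset V}
    (hX : X.card ≤ m) : ∃ Q, IsLongest G Q ∧ (∃ v ∈ Q, v ∈ A) ∧ ∀ v ∈ Q, v ∉ X := by
  by_contra! hno
  exact h ⟨X, hX, hno⟩

/-- If no small set covers a longest path, there is a cycle that few vertices cover, but not
too few. -/
lemma exists_cycle [Fintype V] (hG : G.Connected) {P : List V} {k : ℕ} (hk : 0 < k)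
    (hP : IsLongest G P) (hcov : ¬ Cov G {v | v ∈ P} (4 * k - 1)) :
    ∃ x w, (x :: (w ++ [x])).IsChain G.Adj ∧ (x :: w).Nodup ∧
      ¬ Cov G {v | v ∈ x :: w} (k - 1) ∧
      Cov G {v | v ∈ x :: w} (4 * k + Fintype.card V / k) := by
  classical
  obtain ⟨A₁, P', rfl, hA₁, hA₁'⟩ := exists_prefix_cov (m := 2 * k - 1)
    (fun h => hcov (h.mono subset_rfl (by omega)))
  obtain ⟨A₂, P'', rfl, hA₂, hA₂'⟩ := exists_prefix_cov (l := P') (G := G) (m := 2 * k - 1)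
    (fun h => hcov ((hA₁'.union h).mono (by intro v; simp) (by omega)))
  obtain ⟨L, B, rfl, hB, hB'⟩ := exists_suffix_cov (l := A₁) (G := G) (m := k - 1)
    (fun h => hA₁ (h.mono subset_rfl (by omega)))
  have hshort := exists_short_route (G := G) (L := {v | v ∈ L}) (A := {v | v ∈ A₂})
    (B := {v | v ∈ B}) (k := k) (t := Fintype.card V / k + 1)
    (by
      have := Nat.lt_mul_div_succ (Fintype.card V) hk
      simpa using this)
    (by
      intro X hX
      obtain ⟨Y, hY, hYB⟩ := hB'
      have hcard : (X ∪ Y).card ≤ 2 * k - 1 := (Finset.card_union_le X Y).trans (by omega)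
      obtain ⟨Q₁, hQ₁, ⟨v₁, hv₁, hvA₁⟩, hX₁⟩ := exists_isLongest_of_not_cov hA₁ hcard
      obtain ⟨Q₂, hQ₂, ⟨v₂, hv₂, hvA₂⟩, hX₂⟩ := exists_isLongest_of_not_cov hA₂ hcard
      simp only [Finset.mem_union, not_or] at hX₁ hX₂
      have hB₁ : ∀ v ∈ Q₁, v ∉ B := fun v hv hvB => by
        obtain ⟨u, hu, huY⟩ := hYB Q₁ hQ₁ ⟨v, hv, hvB⟩
        exact (hX₁ u hu).2 huY
      have hB₂ : ∀ v ∈ Q₂, v ∉ B := fun v hv hvB => by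
        obtain ⟨u, hu, huY⟩ := hYB Q₂ hQ₂ ⟨v, hv, hvB⟩
        exact (hX₂ u hu).2 huY
      obtain ⟨u, hu₁, hu₂⟩ := hQ₁.inter hG hQ₂
      obtain ⟨m₁, hm₁, hr₁⟩ := route_of_mem hQ₁.1.1 hv₁ hu₁
      obtain ⟨m₂, hm₂, hr₂⟩ := route_of_mem hQ₂.1.1 hu₂ hv₂
      obtain ⟨l, hl, hlm⟩ := hr₁.trans hr₂
      refine ⟨l, hl.1, ?_, ⟨v₁, hl.mem_left, ?_⟩, ⟨v₂, hl.mem_right, hvA₂⟩⟩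
      · intro v hv
        rcases hlm v hv with h | h
        · exact ⟨hB₁ v (hm₁ h), (hX₁ v (hm₁ h)).1⟩
        · exact ⟨hB₂ v (hm₂ h), (hX₂ v (hm₂ h)).1⟩
      · exact (List.mem_append.1 hvA₁).resolve_right (hB₁ v₁ hv₁))
  obtain ⟨u, hu, v, hv, l, hl, hlB, hlen⟩ := hshort
  have hnd := hP.1.2
  have hLA : ∀ v, v ∈ L → v ∉ A₂ := fun v hv hv' =>
    (List.nodup_append.1 hnd).2.2 v (by simp [hv]) v (by simp [hv']) rfl
  obtain ⟨a, R, b, ha, hb, hR, hRl, hRLA⟩ := exists_clean (A := (· ∈ L)) (B := (· ∈ A₂)) hl.1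
    ⟨u, hl.mem_left, hu⟩ ⟨v, hl.mem_right, hv⟩ hLA
  have hRlen := length_le_of_nodup_subset hR.2 hRl
  have hRB : ∀ v ∈ R, v ∉ B := fun v hv => hlB v (hRl (by simp [hv]))
  obtain ⟨L₁, L₂, rfl⟩ := List.append_of_mem ha
  obtain ⟨M₁, M₂, rfl⟩ := List.append_of_mem hb
  have hsub : (a :: (L₂ ++ B ++ M₁ ++ [b])) <:+:
      L₁ ++ a :: L₂ ++ B ++ (M₁ ++ b :: M₂ ++ P'') := ⟨L₁, M₂ ++ P'', by simp⟩
  refine ⟨a, L₂ ++ B ++ M₁ ++ b :: R.reverse, ?_, ?_, ?_, ?_⟩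
  · have h1 : (b :: (R.reverse ++ [a])).IsChain G.Adj := by simpa using hR.reverse.1
    have := isChain_glue (l₁ := a :: (L₂ ++ B ++ M₁)) (by
      simpa using isChain_segment hP.1.1 hsub) h1
    simpa using this
  · have h1 := hR.2
    have h2 : ((a :: (L₂ ++ B ++ M₁ ++ [b])) ++ R.reverse).Nodup := by
      refine List.nodup_append.2 ⟨hnd.sublist hsub.sublist, ?_, ?_⟩
      · simp only [List.nodup_append, List.nodup_cons, List.nodup_reverse] at h1 ⊢
        exact h1.2.1
      · rintro u hu v hv rfl
        rw [List.mem_reverse] at hv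
        have h3 := hRLA u hv
        have h4 := hRB u hv
        simp only [List.mem_append, List.mem_cons, List.not_mem_nil, or_false] at hu h3
        have h5 : u ≠ a := by rintro rfl; simp [hv] at h1
        have h6 : u ≠ b := by rintro rfl; simp at h3
        tauto
    simpa using h2
  · refine fun h => hB (h.mono ?_ le_rfl)
    intro v hv
    have : v ∈ B := hv
    simp [this]
  · refine ((hA₁'.union hA₂').union (cov_list R)).mono ?_ ?_
    · intro v hv
      simp at hv ⊢
      tauto
    · simp at hRlen
      omega

/-- The transversal number of longest paths is at most linear in the square root of the order. -/
theorem cov_univ_of_lt_sq [Fintype V] (hG : G.Connected) {d : ℕ} (hd : Fintype.card V < d * d) :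
    Cov G Set.univ (9 * d) := by
  have hd0 : 0 < d := Nat.pos_of_ne_zero (by rintro rfl; simp at hd)
  have hdiv : Fintype.card V / (2 * d) ≤ d := by
    have h := Nat.div_le_div_right (c := 2 * d) (hd.le.trans (by
      nlinarith : d * d ≤ d * (2 * d)))
    rwa [Nat.mul_div_cancel _ (by omega)] at h
  by_contra hcov
  obtain ⟨P, hP⟩ := exists_isLongest G
  have hcovP : ∀ m ≤ 9 * d, ¬ Cov G {v | v ∈ P} m := by
    rintro m hm ⟨X, hX, h⟩
    exact hcov ⟨X, hX.trans hm, fun Q hQ _ => h Q hQ (hQ.inter hG hP)⟩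
  obtain ⟨x, w, hc, hn, h1, h2⟩ := exists_cycle hG (k := 2 * d) (by omega) hP
    (hcovP _ (by omega))
  obtain ⟨X, hX, h2⟩ := h2
  obtain ⟨Q, hQ, -, hQX⟩ := exists_isLongest_of_not_cov hcov (X := X) (by omega)
  have hlen : 2 * d ≤ (x :: w).length := by
    by_contra! hlt
    exact h1 ((cov_list (x :: w)).mono subset_rfl (by omega))
  have hQlen : Q.length ≤ d * (2 * d - 1) :=
    hQ.1.2.length_le_card.trans (hd.le.trans (Nat.mul_le_mul_left d (by omega)))
  obtain ⟨v, hv, hvX⟩ := h2 Q hQ (hQ.meets_cycle hG hc hn hlen hQlen h1)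
  exact hQX v hv hvX

lemma isLongest_support {x y : V} {p : G.Walk x y} (hp : p.IsPath)
    (hmax : ∀ (u w : V) (q : G.Walk u w), q.IsPath → q.length ≤ p.length) :
    IsLongest G p.support := by
  refine ⟨⟨p.isChain_adj_support, hp.support_nodup⟩, fun m hm => ?_⟩
  rcases eq_or_ne m [] with rfl | hne
  · simp
  have h := hmax _ _ (SimpleGraph.Walk.ofSupport m hne hm.1) (.mk' (by
    rw [SimpleGraph.Walk.support_ofSupport]; exact hm.2))
  rw [SimpleGraph.Walk.length_ofSupport] at h
  rw [SimpleGraph.Walk.length_support]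
  omega

lemma card_le_or_sqrt_le (n : ℕ) :
    (n : ℝ) ≤ 5 * (n : ℝ) ^ ((2 : ℝ) / 3) ∨
      ((9 * (n.sqrt + 1) : ℕ) : ℝ) ≤ 5 * (n : ℝ) ^ ((2 : ℝ) / 3) := by
  have hn : (0 : ℝ) ≤ n := Nat.cast_nonneg n
  set t : ℝ := (n : ℝ) ^ ((1 : ℝ) / 6) with ht
  have ht0 : 0 ≤ t := Real.rpow_nonneg hn _
  have h6 : (n : ℝ) = t ^ 6 := by
    rw [ht, ← Real.rpow_natCast, ← Real.rpow_mul hn]; norm_num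
  have h4 : (n : ℝ) ^ ((2 : ℝ) / 3) = t ^ 4 := by
    rw [ht, ← Real.rpow_natCast, ← Real.rpow_mul hn]; norm_num
  rw [h4]
  rcases le_total (t ^ 2) 5 with h | h
  · left
    rw [h6]
    nlinarith [pow_nonneg ht0 4]
  · right
    have hs : (n.sqrt : ℝ) ≤ t ^ 3 := by
      refine Real.nat_sqrt_le_real_sqrt.trans (Real.sqrt_le_iff.2 ⟨by positivity, ?_⟩)
      rw [h6]; ring_nf; rfl
    have h2 : (11 : ℝ) / 5 ≤ t := by nlinarith
    have h3 : (5 : ℝ) ≤ t ^ 3 := by nlinarith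
    have h5 : 11 / 5 * t ^ 3 ≤ t ^ 4 := by nlinarith [pow_nonneg ht0 3]
    push_cast
    linarith

end Bound

end GallaiNumber

/-- Every connected graph `G` on `n ≥ 2` vertices has a set of at most
`5 n^{2/3}` vertices meeting every longest path of `G`. -/
theorem gallai_stmt2 {V : Type*} [Fintype V] (G : SimpleGraph V) (hG : G.Connected)
    (hn : 2 ≤ Fintype.card V) :
    ∃ S : Finset V, (S.card : ℝ) ≤ 5 * (Fintype.card V : ℝ) ^ ((2 : ℝ) / 3) ∧
      ∀ (x y : V) (p : G.Walk x y), p.IsPath →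
        (∀ (u w : V) (q : G.Walk u w), q.IsPath → q.length ≤ p.length) →
        ∃ s ∈ S, s ∈ p.support := by
  rcases GallaiNumber.card_le_or_sqrt_le (Fintype.card V) with h | h
  · exact ⟨Finset.univ, by simpa using h, fun x y p _ _ =>
      ⟨x, Finset.mem_univ x, p.start_mem_support⟩⟩
  · obtain ⟨X, hX, hcov⟩ := GallaiNumber.cov_univ_of_lt_sq hG (Nat.lt_succ_sqrt (Fintype.card V))
    refine ⟨X, (Nat.cast_le.2 hX).trans h, fun x y p hp hmax => ?_⟩
    obtain ⟨v, hv, hvX⟩ := hcov _ (GallaiNumber.isLongest_support hp hmax)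
      ⟨x, p.start_mem_support, trivial⟩
    exact ⟨v, hvX, hv⟩
end

section
/- Let M be a connected multigraph, let G be a graph on n vertices such that the family L(M,G) of maximum M-subdivisions in G is pairwise intersecting, let (X,Y) be a G-pretransversal with |X| maximum, and set H := G − X, assumed nonempty. Then for all disjoint sets A, B ⊆ V(H) with s := min(|A|,|B|), there is an A,B-connector in H of size at least s/n^{1/3}. -/
open SimpleGraph

/-- A multigraph with vertex type `W` and edge type `F`: each edge has an
unordered pair of endpoints (possibly equal, giving a loop). -/
structure Multigraph (W : Type*) (F : Type*) where
  ends : F → Sym2 W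

namespace Multigraph

variable {W F : Type*}

/-- Adjacency in a multigraph. -/
def Adj (M : Multigraph W F) (u v : W) : Prop :=
  ∃ e : F, M.ends e = s(u, v)

/-- A multigraph is connected if it is nonempty and any two vertices are joined by a walk. -/
def Connected (M : Multigraph W F) : Prop :=
  Nonempty W ∧ ∀ u v : W, Relation.ReflTransGen M.Adj u v

/-- Delete the edge `e` from the multigraph `M`. -/
def deleteEdge (M : Multigraph W F) (e : F) : Multigraph W {f : F // f ≠ e} where
  ends f := M.ends f.1

/-- An edge of a (connected) multigraph is a cut-edge if deleting it disconnects
the multigraph. -/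
def IsCutEdge (M : Multigraph W F) (e : F) : Prop :=
  ¬ (M.deleteEdge e).Connected

end Multigraph

variable {V W F : Type*}

/-- `Q` is (the subgraph realizing) an `M`-subdivision inside the simple graph `G`:
there is an injective placement `b` of the branch vertices of `M`, and for each edge
`e` of `M` with ends `u e`, `v e` a path (a cycle, if `e` is a loop) of `G` joining
`b (u e)` to `b (v e)`; these paths are internally disjoint from each other and from
the branch vertices, are pairwise edge-disjoint, and their union is exactly `Q`. -/
def IsSubdivisionIn (M : Multigraph W F) (G : SimpleGraph V) (Q : G.Subgraph) : Prop :=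
  ∃ (b : W → V) (u v : F → W) (P : ∀ e : F, G.Walk (b (u e)) (b (v e))),
    Function.Injective b ∧
    (∀ e, M.ends e = s(u e, v e)) ∧
    (∀ e, ∀ h : u e = v e, ((P e).copy rfl (congrArg b h.symm)).IsCycle) ∧
    (∀ e, u e ≠ v e → (P e).IsPath) ∧
    (∀ e, ∀ x ∈ (P e).support, x ∈ Set.range b → x = b (u e) ∨ x = b (v e)) ∧
    (∀ e e', e ≠ e' → ∀ x, x ∈ (P e).support → x ∈ (P e').support → x ∈ Set.range b) ∧
    (∀ e e', e ≠ e' → ∀ a, a ∈ (P e).edges → a ∉ (P e').edges) ∧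
    Q.verts = Set.range b ∪ ⋃ e, {x | x ∈ (P e).support} ∧
    (∀ x y, Q.Adj x y ↔ ∃ e, (P e).toSubgraph.Adj x y)

/-- `Q` is a maximum `M`-subdivision among those contained in the subgraph `H` of `G`
(maximum with respect to the number of edges). -/
def IsMaxSubdivisionIn (M : Multigraph W F) (G : SimpleGraph V) (H Q : G.Subgraph) : Prop :=
  IsSubdivisionIn M G Q ∧ Q ≤ H ∧
    ∀ R : G.Subgraph, IsSubdivisionIn M G R → R ≤ H →
      R.edgeSet.ncard ≤ Q.edgeSet.ncard

/-- The family `L(M,H)` of maximum `M`-subdivisions in `H` is pairwise intersecting. -/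
def PairwiseIntersectingIn (M : Multigraph W F) (G : SimpleGraph V) (H : G.Subgraph) : Prop :=
  ∀ Q R : G.Subgraph, IsMaxSubdivisionIn M G H Q → IsMaxSubdivisionIn M G H R →
    (Q.verts ∩ R.verts).Nonempty

/-- `S` is a transversal of the family `L(M,H)` of maximum `M`-subdivisions in `H`. -/
def IsTransversalIn (M : Multigraph W F) (G : SimpleGraph V) (H : G.Subgraph)
    (S : Set V) : Prop :=
  ∀ Q : G.Subgraph, IsMaxSubdivisionIn M G H Q → (S ∩ Q.verts).Nonempty

/-- `(X, Y)` is an `H`-pretransversal: `Y ⊆ X ⊆ V(H)`, `n^{1/3}·|Y| ≤ |X|`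
(where `n = |V(G)|`), and every maximum `M`-subdivision `Q` in `H` satisfies
`Q ⊆ H − X` or `Q ∩ Y ≠ ∅`. -/
def IsPretransversal [Fintype V] (M : Multigraph W F) (G : SimpleGraph V)
    (H : G.Subgraph) (X Y : Set V) : Prop :=
  Y ⊆ X ∧ X ⊆ H.verts ∧
    (Fintype.card V : ℝ) ^ ((1 : ℝ) / 3) * (Y.ncard : ℝ) ≤ (X.ncard : ℝ) ∧
    ∀ Q : G.Subgraph, IsMaxSubdivisionIn M G H Q →
      Q ≤ H.deleteVerts X ∨ (Q.verts ∩ Y).Nonempty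

/-- An `A,B`-connector of size `k` inside the subgraph `H` of `G`: `k` pairwise
vertex-disjoint paths of `H`, each meeting `A` exactly in its first vertex and
meeting `B` exactly in its last vertex. -/
def IsConnector (G : SimpleGraph V) (H : G.Subgraph) (A B : Set V) (k : ℕ) : Prop :=
  ∃ (a : Fin k → V) (b : Fin k → V) (p : ∀ i : Fin k, G.Walk (a i) (b i)),
    (∀ i, (p i).IsPath) ∧
    (∀ i, (p i).toSubgraph ≤ H) ∧
    (∀ i, {x | x ∈ (p i).support} ∩ A = {a i}) ∧
    (∀ i, {x | x ∈ (p i).support} ∩ B = {b i}) ∧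
    (∀ i j, i ≠ j → ∀ x, x ∈ (p i).support → x ∉ (p j).support)
namespace SimpleGraph

/-- There is a walk of `G` from `a` to `b` all of whose vertices lie in `U`. -/
def JoinedWithin (G : SimpleGraph V) (U : Set V) (a b : V) : Prop :=
  ∃ p : G.Walk a b, ∀ x ∈ p.support, x ∈ U

namespace JoinedWithin

variable {G G' : SimpleGraph V} {U U' : Set V} {a b c : V}

lemma refl (G : SimpleGraph V) (ha : a ∈ U) : G.JoinedWithin U a a :=
  ⟨Walk.nil, by simpa using ha⟩

lemma symm (h : G.JoinedWithin U a b) : G.JoinedWithin U b a := by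
  obtain ⟨p, hp⟩ := h
  exact ⟨p.reverse, by simpa using hp⟩

lemma trans (h : G.JoinedWithin U a b) (h' : G.JoinedWithin U b c) :
    G.JoinedWithin U a c := by
  obtain ⟨p, hp⟩ := h
  obtain ⟨q, hq⟩ := h'
  refine ⟨p.append q, fun x hx ↦ ?_⟩
  rcases (Walk.mem_support_append_iff p q).1 hx with h | h
  exacts [hp x h, hq x h]

lemma mono (hG : G ≤ G') (hU : U ⊆ U') (h : G.JoinedWithin U a b) :
    G'.JoinedWithin U' a b := by
  obtain ⟨p, hp⟩ := h
  exact ⟨p.mapLe hG, fun x hx ↦ hU (hp x (by simpa using hx))⟩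

lemma left_mem (h : G.JoinedWithin U a b) : a ∈ U := by
  obtain ⟨p, hp⟩ := h
  exact hp _ p.start_mem_support

lemma right_mem (h : G.JoinedWithin U a b) : b ∈ U := h.symm.left_mem

lemma of_adj (h : G.Adj a b) (ha : a ∈ U) (hb : b ∈ U) : G.JoinedWithin U a b :=
  ⟨h.toWalk, by simp [ha, hb]⟩

/-- A walk within `U` either avoids `S` or reaches `S`. -/
lemma diff_or_exists_mem (S : Set V) (h : G.JoinedWithin U a b) :
    G.JoinedWithin (U \ S) a b ∨ ∃ s ∈ S, G.JoinedWithin U a s := by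
  classical
  obtain ⟨p, hp⟩ := h
  by_cases hS : ∃ s ∈ p.support, s ∈ S
  · obtain ⟨s, hs, hsS⟩ := hS
    exact .inr ⟨s, hsS, p.takeUntil s hs,
      fun x hx ↦ hp x (p.support_takeUntil_subset_support hs hx)⟩
  · push Not at hS
    exact .inl ⟨p, fun x hx ↦ ⟨hp x hx, hS x hx⟩⟩

/-- A walk either avoids the edge `xy` or splits at it. -/
lemma deleteEdge_or (x y : V) (h : G.JoinedWithin U a b) :
    (G.deleteEdges {s(x, y)}).JoinedWithin U a b ∨
      ((G.deleteEdges {s(x, y)}).JoinedWithin U a x ∧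
        (G.deleteEdges {s(x, y)}).JoinedWithin U y b) ∨
      ((G.deleteEdges {s(x, y)}).JoinedWithin U a y ∧
        (G.deleteEdges {s(x, y)}).JoinedWithin U x b) := by
  obtain ⟨p, hp⟩ := h
  induction p with
  | nil => exact .inl (refl _ (hp _ (by simp)))
  | @cons u v w huv p ih =>
    have hu : u ∈ U := hp _ (by simp)
    have ih := ih fun z hz ↦ hp z (by simp [hz])
    have hv : v ∈ U := hp _ (by simp)
    by_cases he : s(u, v) = s(x, y)
    · rcases Sym2.eq_iff.1 he with ⟨rfl, rfl⟩ | ⟨rfl, rfl⟩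
      · rcases ih with h | ⟨-, h⟩ | ⟨-, h⟩
        exacts [.inr (.inl ⟨refl _ hu, h⟩), .inr (.inl ⟨refl _ hu, h⟩), .inl h]
      · rcases ih with h | ⟨-, h⟩ | ⟨-, h⟩
        exacts [.inr (.inr ⟨refl _ hu, h⟩), .inl h, .inr (.inr ⟨refl _ hu, h⟩)]
    · have huv' : (G.deleteEdges {s(x, y)}).JoinedWithin U u v :=
        of_adj (by simpa [deleteEdges_adj] using ⟨huv, by simpa using he⟩) hu hv
      rcases ih with h | ⟨h, h'⟩ | ⟨h, h'⟩
      exacts [.inl (huv'.trans h), .inr (.inl ⟨huv'.trans h, h'⟩),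
        .inr (.inr ⟨huv'.trans h, h'⟩)]

end JoinedWithin

/-- `S` meets every walk of `G` from `A` to `B`. -/
def Separates (G : SimpleGraph V) (A B S : Set V) : Prop :=
  ∀ a ∈ A, ∀ b ∈ B, ¬ G.JoinedWithin Sᶜ a b

lemma Separates.symm {G : SimpleGraph V} {A B S : Set V} (h : G.Separates A B S) :
    G.Separates B A S :=
  fun b hb a ha hab ↦ h a ha b hb hab.symm

/-- There are `k` pairwise disjoint vertex sets, each containing a walk from `A` to `B`. -/
def HasLinkage (G : SimpleGraph V) (A B : Set V) (k : ℕ) : Prop :=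
  ∃ T : Fin k → Set V, Pairwise (fun i j ↦ Disjoint (T i) (T j)) ∧
    ∀ i, ∃ a ∈ A, ∃ b ∈ B, G.JoinedWithin (T i) a b

lemma HasLinkage.mono {G G' : SimpleGraph V} (hG : G ≤ G') {A B : Set V} {k : ℕ}
    (h : G.HasLinkage A B k) : G'.HasLinkage A B k := by
  obtain ⟨T, hT, h⟩ := h
  refine ⟨T, hT, fun i ↦ ?_⟩
  obtain ⟨a, ha, b, hb, hab⟩ := h i
  exact ⟨a, ha, b, hb, hab.mono hG subset_rfl⟩

/-- If a linkage is onto its target `P`, it may be indexed by `P` and taken to consist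
of paths ending in `P`. -/
lemma HasLinkage.exists_family [Finite V] {G : SimpleGraph V} {A P : Set V}
    (h : G.HasLinkage A P P.ncard) :
    ∃ T : V → Set V, (∀ v ∈ P, v ∈ T v) ∧ P.PairwiseDisjoint T ∧
      ∀ v ∈ P, ∃ a ∈ A, ∀ z ∈ T v, G.JoinedWithin (insert z (T v \ {v})) a z := by
  classical
  obtain ⟨T, hT, h⟩ := h
  choose a ha p hp hap using h
  choose w hw using hap
  have hinj : Function.Injective p := by
    intro i j hij
    by_contra hne
    refine Set.disjoint_left.1 (hT hne) (hw i _ (w i).end_mem_support) ?_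
    rw [hij]
    exact hw j _ (w j).end_mem_support
  have hrange : Set.range p = P := by
    refine Set.eq_of_subset_of_ncard_le (Set.range_subset_iff.2 hp) ?_
    rw [← Set.image_univ, Set.ncard_image_of_injective _ hinj, Set.ncard_univ, Nat.card_fin]
  have hex : ∀ v : P, ∃ i, p i = v ∧ ∃ q : G.Walk (a i) v, q.IsPath ∧
      ∀ x ∈ q.support, x ∈ T i := by
    rintro ⟨v, hv⟩
    obtain ⟨i, rfl⟩ := hrange.ge hv
    exact ⟨i, rfl, (w i).bypass, Walk.bypass_isPath _,
      fun x hx ↦ hw i x (Walk.support_bypass_subset_support _ hx)⟩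
  choose f hf q hq hqT using hex
  refine ⟨fun v ↦ {z | ∃ hv : v ∈ P, z ∈ (q ⟨v, hv⟩).support},
    fun v hv ↦ ⟨hv, Walk.end_mem_support _⟩, ?_, fun v hv ↦ ⟨a (f ⟨v, hv⟩), ha _, ?_⟩⟩
  · intro v hv v' hv' hne
    refine Set.disjoint_left.2 ?_
    rintro z ⟨_, hz⟩ ⟨_, hz'⟩
    have hff : f ⟨v, hv⟩ ≠ f ⟨v', hv'⟩ := fun h ↦ hne <| by
      have := congrArg p h
      rwa [hf, hf] at this
    exact Set.disjoint_left.1 (hT hff) (hqT _ z hz) (hqT _ z hz')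
  · rintro z ⟨_, hz⟩
    refine ⟨(q ⟨v, hv⟩).takeUntil z hz, fun x hx ↦ ?_⟩
    by_cases hxz : x = z
    · exact .inl hxz
    · refine .inr ⟨⟨hv, Walk.support_takeUntil_subset_support _ hz hx⟩, ?_⟩
      rintro rfl
      exact Walk.endpoint_notMem_support_takeUntil (hq _) hz hxz hx

lemma le_ncard_of_separates_insert {G : SimpleGraph V} {A B S : Set V} {x y b₀ : V}
    {k : ℕ} (hk : ∀ S, G.Separates A B S → k ≤ S.ncard)
    (hS : (G.deleteEdges {s(x, y)}).Separates A B S) (hb₀ : b₀ ∈ B)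
    (hy : (G.deleteEdges {s(x, y)}).JoinedWithin Sᶜ y b₀) {R : Set V}
    (hR : (G.deleteEdges {s(x, y)}).Separates A (insert x S) R) : k ≤ R.ncard := by
  refine hk R fun a ha b hb hab ↦ ?_
  have key : ∀ c d, d ∈ B → (G.deleteEdges {s(x, y)}).JoinedWithin Rᶜ a c →
      (G.deleteEdges {s(x, y)}).JoinedWithin Sᶜ c d → False := by
    intro c d hd hac hcd
    rcases hac.diff_or_exists_mem S with h | ⟨s, hs, h⟩
    · exact hS a ha d hd ((h.mono le_rfl fun z hz ↦ hz.2).trans hcd)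
    · exact hR a ha s (.inr hs) h
  rcases hab.deleteEdge_or x y with h | ⟨h, -⟩ | ⟨h, -⟩
  · by_cases hbS : b ∈ S
    · exact hR a ha b (.inr hbS) h
    · exact key b b hb h (.refl _ hbS)
  · exact hR a ha x (.inl rfl) h
  · exact key y b₀ hb₀ h hy

lemma hasLinkage_glue [Finite V] {G : SimpleGraph V} {A B S : Set V} {x y : V}
    (hxy : G.Adj x y) (hS : (G.deleteEdges {s(x, y)}).Separates A B S)
    (hxS : x ∉ S) (hyS : y ∉ S)
    (hA : (G.deleteEdges {s(x, y)}).HasLinkage A (insert x S) (insert x S).ncard)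
    (hB : (G.deleteEdges {s(x, y)}).HasLinkage B (insert y S) (insert y S).ncard) :
    G.HasLinkage A B (insert x S).ncard := by
  classical
  obtain ⟨T, hTm, hTd, hT⟩ := hA.exists_family
  obtain ⟨T', hTm', hTd', hT'⟩ := hB.exists_family
  have hle : G.deleteEdges {s(x, y)} ≤ G := deleteEdges_le _
  have avoid : ∀ {x : V} {T : V → Set V}, (∀ v ∈ insert x S, v ∈ T v) →
      (insert x S).PairwiseDisjoint T → ∀ v ∈ insert x S, ∀ z ∈ T v, z ∈ S → z = v := by
    intro x T hTm hTd v hv z hz hzS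
    by_contra hne
    exact Set.disjoint_left.1 (hTd (.inr hzS) hv hne) (hTm z (.inr hzS)) hz
  have hmeet : ∀ v ∈ insert x S, ∀ w ∈ insert y S, ∀ z, z ∈ T v → z ∈ T' w → z = v ∧ z = w := by
    intro v hv w hw z hz hz'
    by_cases hzS : z ∈ S
    · exact ⟨avoid hTm hTd v hv z hz hzS, avoid hTm' hTd' w hw z hz' hzS⟩
    · exfalso
      obtain ⟨a, ha, h⟩ := hT v hv
      obtain ⟨b, hb, h'⟩ := hT' w hw
      refine hS a ha b hb (((h z hz).mono le_rfl ?_).trans ((h' z hz').mono le_rfl ?_).symm)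
      · rintro u (rfl | ⟨hu, hne⟩) huS
        exacts [hzS huS, hne (avoid hTm hTd v hv u hu huS)]
      · rintro u (rfl | ⟨hu, hne⟩) huS
        exacts [hzS huS, hne (avoid hTm' hTd' w hw u hu huS)]
  let τ : V → V := fun v ↦ if v = x then y else v
  have hτ : ∀ v ∈ insert x S, τ v ∈ insert y S := by
    rintro v (rfl | hv)
    · simp [τ]
    · by_cases h : v = x <;> simp [τ, h, hv]
  have hτS : ∀ v ∈ insert x S, τ v ∈ S → τ v = v := by
    intro v _ hv
    by_cases h : v = x
    · simp only [τ, h, if_true] at hv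
      exact absurd hv hyS
    · simp [τ, h]
  have hτinj : ∀ v ∈ insert x S, ∀ w ∈ insert x S, τ v = τ w → v = w := by
    intro v hv w hw h
    by_cases h₁ : v = x <;> by_cases h₂ : w = x
    · rw [h₁, h₂]
    · simp only [τ, h₁, h₂, if_true, if_false] at h
      exact absurd (h ▸ hw.resolve_left h₂) hyS
    · simp only [τ, h₁, h₂, if_true, if_false] at h
      exact absurd (h ▸ hv.resolve_left h₁) hyS
    · simpa [τ, h₁, h₂] using h
  have hcross : ∀ v ∈ insert x S, ∀ w ∈ insert x S, v ≠ w → Disjoint (T v) (T' (τ w)) := by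
    intro v hv w hw hne
    refine Set.disjoint_left.2 fun z hz hz' ↦ ?_
    obtain ⟨rfl, h⟩ := hmeet v hv _ (hτ w hw) z hz hz'
    by_cases hzS : z ∈ S
    · exact hne (h.trans (hτS w hw (h ▸ hzS)))
    · have h1 : z = x := hv.resolve_right hzS
      have h2 : w ≠ x := fun h' ↦ hne (h1.trans h'.symm)
      simp only [τ, h2, if_false] at h
      exact hne h
  let e : Fin (insert x S).ncard ≃ (insert x S : Set V) :=
    (finCongr (Nat.card_coe_set_eq _).symm).trans (Finite.equivFin _).symm
  refine ⟨fun i ↦ T (e i) ∪ T' (τ (e i)), fun i j hij ↦ ?_, fun i ↦ ?_⟩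
  · have hne : (e i : V) ≠ e j := fun h ↦ hij (e.injective (Subtype.ext h))
    change Disjoint (T (e i) ∪ T' (τ (e i))) (T (e j) ∪ T' (τ (e j)))
    rw [Set.disjoint_union_left, Set.disjoint_union_right, Set.disjoint_union_right]
    exact ⟨⟨hTd (e i).2 (e j).2 hne, hcross _ (e i).2 _ (e j).2 hne⟩,
      (hcross _ (e j).2 _ (e i).2 hne.symm).symm,
      hTd' (hτ _ (e i).2) (hτ _ (e j).2) fun h ↦ hne (hτinj _ (e i).2 _ (e j).2 h)⟩
  · beta_reduce
    generalize e i = v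
    obtain ⟨v, hv⟩ := v
    dsimp only
    obtain ⟨a, ha, h⟩ := hT v hv
    obtain ⟨b, hb, h'⟩ := hT' (τ v) (hτ v hv)
    have h₁ := (h v (hTm v hv)).mono hle (U' := T v ∪ T' (τ v)) (by
      rintro z (rfl | hz)
      exacts [.inl (hTm _ hv), .inl hz.1])
    have h₂ := (h' (τ v) (hTm' _ (hτ v hv))).mono hle (U' := T v ∪ T' (τ v)) (by
      rintro z (rfl | hz)
      exacts [.inr (hTm' _ (hτ v hv)), .inr hz.1])
    refine ⟨a, ha, b, hb, h₁.trans (JoinedWithin.trans ?_ h₂.symm)⟩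
    by_cases hvx : v = x
    · have hτx : τ v = y := by simp [τ, hvx]
      refine .of_adj ?_ h₁.right_mem h₂.right_mem
      rw [hτx, hvx]
      exact hxy
    · have hτv : τ v = v := by simp [τ, hvx]
      rw [hτv] at h₂ ⊢
      exact .refl _ h₂.right_mem

/-- **Menger's theorem** for vertex sets of a finite graph. -/
theorem hasLinkage_of_le_ncard_of_separates [Finite V] (G : SimpleGraph V) :
    ∀ (A B : Set V) (k : ℕ), (∀ S, G.Separates A B S → k ≤ S.ncard) → G.HasLinkage A B k := by
  induction G using WellFoundedLT.induction with
  | ind G ih =>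
  intro A B k hk
  by_cases hG : ∃ x y, G.Adj x y
  · obtain ⟨x₀, y₀, hxy₀⟩ := hG
    by_cases hk' : ∀ S, (G.deleteEdges {s(x₀, y₀)}).Separates A B S → k ≤ S.ncard
    · have hlt : G.deleteEdges {s(x₀, y₀)} < G :=
        lt_of_le_of_ne (deleteEdges_le _) fun h ↦ by
          rw [← h] at hxy₀
          simp [deleteEdges_adj] at hxy₀
      exact (ih _ hlt A B k hk').mono (deleteEdges_le _)
    · push Not at hk'
      obtain ⟨S, hS₀, hSk⟩ := hk'
      have hnot : ¬ G.Separates A B S := fun h ↦ (hk S h).not_gt hSk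
      simp only [Separates, not_forall, not_not] at hnot
      obtain ⟨a, ha, b, hb, hab⟩ := hnot
      obtain ⟨x, y, hxy, hS, hax, hyb⟩ : ∃ x y, G.Adj x y ∧
          (G.deleteEdges {s(x, y)}).Separates A B S ∧
          (G.deleteEdges {s(x, y)}).JoinedWithin Sᶜ a x ∧
          (G.deleteEdges {s(x, y)}).JoinedWithin Sᶜ y b := by
        rcases hab.deleteEdge_or x₀ y₀ with h | ⟨h, h'⟩ | ⟨h, h'⟩
        · exact absurd h (hS₀ a ha b hb)
        · exact ⟨x₀, y₀, hxy₀, hS₀, h, h'⟩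
        · rw [Sym2.eq_swap] at hS₀ h h'
          exact ⟨y₀, x₀, hxy₀.symm, hS₀, h, h'⟩
      have hlt : G.deleteEdges {s(x, y)} < G :=
        lt_of_le_of_ne (deleteEdges_le _) fun h ↦ by
          rw [← h] at hxy
          simp [deleteEdges_adj] at hxy
      have hxS : x ∉ S := hax.right_mem
      have hyS : y ∉ S := hyb.left_mem
      have hsep : G.Separates A B (insert x S) := by
        intro a' ha' b' hb' h
        rcases h.deleteEdge_or x y with h | ⟨h, -⟩ | ⟨-, h⟩
        · exact hS a' ha' b' hb' (h.mono le_rfl (Set.compl_subset_compl.2 (Set.subset_insert _ _)))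
        · exact h.right_mem (.inl rfl)
        · exact h.left_mem (.inl rfl)
      have hcx : (insert x S).ncard = S.ncard + 1 := Set.ncard_insert_of_notMem hxS
      have hcy : (insert y S).ncard = S.ncard + 1 := Set.ncard_insert_of_notMem hyS
      have hkx : k = (insert x S).ncard := by
        have := hk _ hsep
        omega
      have hky : k = (insert y S).ncard := by omega
      have hA := ih _ hlt A (insert x S) k fun R hR ↦
        le_ncard_of_separates_insert hk hS hb hyb hR
      have hB := ih _ hlt B (insert y S) k fun R hR ↦ by
        rw [Sym2.eq_swap] at hR hS hax
        exact le_ncard_of_separates_insert (fun S' hS' ↦ hk S' hS'.symm) hS.symm ha hax.symm hR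
      rw [hkx] at hA ⊢
      rw [hky] at hB
      exact hasLinkage_glue hxy hS hxS hyS hA hB
  · have hG' : ∀ {U : Set V} {a b : V}, G.JoinedWithin U a b → a = b := by
      rintro U a b ⟨p, -⟩
      cases p with
      | nil => rfl
      | cons h _ => exact absurd ⟨_, _, h⟩ hG
    have hle := hk (A ∩ B) fun a ha b hb h ↦ by
      obtain rfl := hG' h
      exact h.left_mem ⟨ha, hb⟩
    rw [← Nat.card_coe_set_eq] at hle
    let f : Fin k → (A ∩ B : Set V) := fun i ↦ (Finite.equivFin _).symm (Fin.castLE hle i)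
    have hf : Function.Injective f :=
      (Finite.equivFin _).symm.injective.comp (Fin.castLE_injective hle)
    refine ⟨fun i ↦ {(f i : V)}, fun i j hij ↦ ?_, fun i ↦ ?_⟩
    · exact Set.disjoint_singleton.2 fun h ↦ hij (hf (Subtype.ext h))
    · exact ⟨f i, (f i).2.1, f i, (f i).2.2, .refl _ rfl⟩

/-- A walk from `A` to `B` can be shortened to a path meeting `A` and `B` only in its ends. -/
lemma exists_isPath_inter_eq {G : SimpleGraph V} {A B U : Set V} {a b : V} (ha : a ∈ A)
    (hb : b ∈ B) (h : G.JoinedWithin U a b) :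
    ∃ (a b : V) (p : G.Walk a b), p.IsPath ∧ (∀ x ∈ p.support, x ∈ U) ∧
      {x | x ∈ p.support} ∩ A = {a} ∧ {x | x ∈ p.support} ∩ B = {b} := by
  classical
  have hex : ∃ n, ∃ a ∈ A, ∃ b ∈ B, ∃ p : G.Walk a b,
      (∀ x ∈ p.support, x ∈ U) ∧ p.length ≤ n := by
    obtain ⟨p, hp⟩ := h
    exact ⟨p.length, a, ha, b, hb, p, hp, le_rfl⟩
  obtain ⟨a, ha, b, hb, p, hp, hn⟩ := Nat.find_spec hex
  have hmin : ∀ a' ∈ A, ∀ b' ∈ B, ∀ q : G.Walk a' b', (∀ x ∈ q.support, x ∈ U) →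
      Nat.find hex ≤ q.length :=
    fun a' ha' b' hb' q hq ↦ Nat.find_min' hex ⟨a', ha', b', hb', q, hq, le_rfl⟩
  have hq : ∀ x ∈ p.bypass.support, x ∈ U :=
    fun x hx ↦ hp x (Walk.support_bypass_subset_support _ hx)
  have hqn : p.bypass.length ≤ Nat.find hex := p.length_bypass_le_length.trans hn
  refine ⟨a, b, p.bypass, p.bypass_isPath, hq, ?_, ?_⟩
  · refine Set.Subset.antisymm ?_ (Set.singleton_subset_iff.2 ⟨Walk.start_mem_support _, ha⟩)
    rintro x ⟨hx, hxA⟩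
    by_contra hne
    have h₁ := hmin x hxA b hb (p.bypass.dropUntil x hx) fun z hz ↦
      hq z (Walk.support_dropUntil_subset_support _ hx hz)
    have h₂ := Walk.length_dropUntil_lt_length hx hne
    omega
  · refine Set.Subset.antisymm ?_ (Set.singleton_subset_iff.2 ⟨Walk.end_mem_support _, hb⟩)
    rintro x ⟨hx, hxB⟩
    by_contra hne
    have h₁ := hmin a ha x hxB (p.bypass.takeUntil x hx) fun z hz ↦
      hq z (Walk.support_takeUntil_subset_support _ hx hz)
    have h₂ := Walk.length_takeUntil_lt_length hx hne
    omega

end SimpleGraph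

/-- A linkage in the spanning graph of `H` yields a connector in `H`. -/
lemma SimpleGraph.HasLinkage.isConnector {G : SimpleGraph V} {H : G.Subgraph} {A B : Set V}
    {k : ℕ} (hA : A ⊆ H.verts) (h : H.spanningCoe.HasLinkage A B k) :
    IsConnector G H A B k := by
  obtain ⟨T, hT, h⟩ := h
  choose a₀ ha₀ b₀ hb₀ hab using h
  choose a b p hp hpT hpA hpB using fun i ↦ exists_isPath_inter_eq (ha₀ i) (hb₀ i) (hab i)
  have hle : H.spanningCoe ≤ G := H.spanningCoe_le
  refine ⟨a, b, fun i ↦ (p i).mapLe hle, fun i ↦ (Walk.isPath_mapLe hle).2 (hp i), fun i ↦ ?_,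
    fun i ↦ by simpa using hpA i, fun i ↦ by simpa using hpB i, fun i j hij x hx hx' ↦ ?_⟩
  · have haA : a i ∈ A := by
      have : a i ∈ {x | x ∈ (p i).support} ∩ A := by rw [hpA i]; rfl
      exact this.2
    have hsupp : ∀ {u v : V} (q : H.spanningCoe.Walk u v), u ∈ H.verts →
        ∀ x ∈ q.support, x ∈ H.verts := by
      intro u v q
      induction q with
      | nil => simp
      | cons hadj q ih =>
        intro hu x hx
        rcases List.mem_cons.1 hx with rfl | hx
        exacts [hu, ih (H.edge_vert (Subgraph.Adj.symm hadj)) x hx]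
    refine ⟨fun x hx ↦ ?_, fun x y hxy ↦ ?_⟩
    · exact hsupp (p i) (hA haA) x (by simpa using hx)
    · rw [Walk.adj_toSubgraph_iff_mem_edges] at hxy
      rw [Walk.edges_mapLe_eq_edges] at hxy
      exact (p i).adj_of_mem_edges hxy
  · exact Set.disjoint_left.1 (hT hij) (hpT i x (by simpa using hx))
      (hpT j x (by simpa using hx'))

/-- Subdivisions of connected multigraphs are connected. -/
lemma IsSubdivisionIn.joinedWithin {M : Multigraph W F} (hM : M.Connected) {G : SimpleGraph V}
    {Q : G.Subgraph} (hQ : IsSubdivisionIn M G Q) {x y : V} (hx : x ∈ Q.verts)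
    (hy : y ∈ Q.verts) : Q.spanningCoe.JoinedWithin Q.verts x y := by
  classical
  obtain ⟨b, u, v, P, -, hends, -, -, -, -, -, hverts, hadj⟩ := hQ
  have hsupp : ∀ e, ∀ z ∈ (P e).support, z ∈ Q.verts := fun e z hz ↦ by
    rw [hverts]
    exact .inr (Set.mem_iUnion.2 ⟨e, hz⟩)
  have hstart : ∀ e, ∀ z ∈ (P e).support,
      Q.spanningCoe.JoinedWithin Q.verts (b (u e)) z := by
    intro e z hz
    have hedge : ∀ d ∈ (P e).edges, d ∈ Q.spanningCoe.edgeSet := by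
      intro d
      induction d with
      | _ c d => exact fun h ↦ (hadj c d).2 ⟨e, Walk.adj_toSubgraph_iff_mem_edges.2 h⟩
    refine ⟨((P e).transfer Q.spanningCoe hedge).takeUntil z (by simpa using hz),
      fun w hw ↦ hsupp e w ?_⟩
    simpa using Walk.support_takeUntil_subset_support _ _ hw
  have hbranch : ∀ w w', Q.spanningCoe.JoinedWithin Q.verts (b w) (b w') := by
    intro w w'
    induction hM.2 w w' with
    | refl => exact .refl _ (by rw [hverts]; exact .inl ⟨w, rfl⟩)
    | tail _ h ih =>
      obtain ⟨e, he⟩ := h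
      refine ih.trans ?_
      have := hstart e _ (P e).end_mem_support
      rcases Sym2.eq_iff.1 ((hends e).symm.trans he) with ⟨h₁, h₂⟩ | ⟨h₁, h₂⟩
      · rwa [h₁, h₂] at this
      · rw [h₁, h₂] at this
        exact this.symm
  have hto : ∀ z ∈ Q.verts, ∃ w, Q.spanningCoe.JoinedWithin Q.verts (b w) z := by
    intro z hz
    have hz' := hz
    rw [hverts] at hz'
    rcases hz' with ⟨w, rfl⟩ | hz'
    · exact ⟨w, hbranch w w⟩
    · obtain ⟨e, he⟩ := Set.mem_iUnion.1 hz'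
      exact ⟨u e, hstart e z he⟩
  obtain ⟨w, hw⟩ := hto x hx
  obtain ⟨w', hw'⟩ := hto y hy
  exact hw.symm.trans ((hbranch w w').trans hw')

/-- If no maximum subdivision avoiding `Y` and `S` meets the part of `G − X` that is reachable
from `A` outside `S`, then a maximum pretransversal forces `S` to be large. -/
lemma IsPretransversal.ncard_le_mul_ncard [Fintype V] {M : Multigraph W F} {G : SimpleGraph V}
    {X Y : Set V} (hXY : IsPretransversal M G ⊤ X Y)
    (hmax : ∀ X' Y' : Set V, IsPretransversal M G ⊤ X' Y' → X'.ncard ≤ X.ncard)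
    {A S : Set V} (hA : Disjoint A X)
    (h : ∀ Q : G.Subgraph, IsMaxSubdivisionIn M G ⊤ Q → Q ≤ (⊤ : G.Subgraph).deleteVerts X →
      Disjoint Q.verts S → ∀ a ∈ A, ∀ z ∈ Q.verts,
      ¬ ((⊤ : G.Subgraph).deleteVerts X).spanningCoe.JoinedWithin Sᶜ a z) :
    (A.ncard : ℝ) ≤ (Fintype.card V : ℝ) ^ ((1 : ℝ) / 3) * (S.ncard : ℝ) := by
  by_contra! hlt
  set K := ((⊤ : G.Subgraph).deleteVerts X).spanningCoe
  set c := (Fintype.card V : ℝ) ^ ((1 : ℝ) / 3) with hc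
  have hc0 : 0 ≤ c := by positivity
  set C : Set V := {z | ∃ a ∈ A, K.JoinedWithin Sᶜ a z}
  have hsub : X ∪ A ⊆ X ∪ (C ∪ S) := by
    refine Set.union_subset_union_right _ fun a ha ↦ ?_
    by_cases haS : a ∈ S
    · exact .inr haS
    · exact .inl ⟨a, ha, .refl _ haS⟩
  have hcard : X.ncard + A.ncard ≤ (X ∪ (C ∪ S)).ncard := by
    rw [← Set.ncard_union_eq hA.symm]
    exact Set.ncard_le_ncard hsub
  have hcardY : (Y ∪ S).ncard ≤ Y.ncard + S.ncard := Set.ncard_union_le _ _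
  obtain ⟨hYX, -, hcXY, hQ⟩ := hXY
  have hcard' : (X.ncard : ℝ) + A.ncard ≤ ((X ∪ (C ∪ S)).ncard : ℝ) := by exact_mod_cast hcard
  have hcardY' : ((Y ∪ S).ncard : ℝ) ≤ Y.ncard + S.ncard := by exact_mod_cast hcardY
  have hle := hmax (X ∪ (C ∪ S)) (Y ∪ S) ⟨Set.union_subset_union hYX Set.subset_union_right,
    Set.subset_univ _, by nlinarith [mul_le_mul_of_nonneg_left hcardY' hc0], ?_⟩
  · have hA0 : (A.ncard : ℝ) ≤ 0 := by
      have : A.ncard ≤ 0 := by omega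
      exact_mod_cast this
    have : 0 ≤ c * (S.ncard : ℝ) := by positivity
    linarith
  · intro Q hQmax
    by_cases hQY : (Q.verts ∩ Y).Nonempty
    · exact .inr (hQY.mono (Set.inter_subset_inter_right _ Set.subset_union_left))
    by_cases hQS : (Q.verts ∩ S).Nonempty
    · exact .inr (hQS.mono (Set.inter_subset_inter_right _ Set.subset_union_right))
    have hQX := (hQ Q hQmax).resolve_right hQY
    have hdisj : Disjoint Q.verts S :=
      Set.disjoint_iff_inter_eq_empty.2 (Set.not_nonempty_iff_eq_empty.1 hQS)
    have hv : ∀ z ∈ Q.verts, z ∉ X ∪ (C ∪ S) := by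
      rintro z hz (hzX | ⟨a, ha, haz⟩ | hzS)
      · exact (hQX.1 hz).2 hzX
      · exact h Q hQmax hQX hdisj a ha z hz haz
      · exact Set.disjoint_left.1 hdisj hz hzS
    refine .inl ⟨fun z hz ↦ ⟨trivial, hv z hz⟩, fun z w hzw ↦ ?_⟩
    rw [Subgraph.deleteVerts_adj]
    exact ⟨trivial, hv z (Q.edge_vert hzw), trivial, hv w (Q.edge_vert hzw.symm), Q.adj_sub hzw⟩

/-- Suppose `L(M,G)` is pairwise intersecting, `(X,Y)` is a
`G`-pretransversal with `|X|` maximum, and `H := G − X` is nonempty. Then for all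
disjoint `A, B ⊆ V(H)` there is an `A,B`-connector in `H` of size at least
`min(|A|,|B|) / n^{1/3}`. -/
theorem gallai_stmt6 {V W F : Type*} [Fintype V] [Fintype W] [Fintype F]
    (M : Multigraph W F) (hM : M.Connected) (G : SimpleGraph V)
    (hpi : PairwiseIntersectingIn M G ⊤)
    (X Y : Set V) (hXY : IsPretransversal M G ⊤ X Y)
    (hmax : ∀ X' Y' : Set V, IsPretransversal M G ⊤ X' Y' → X'.ncard ≤ X.ncard)
    (H : SimpleGraph.Subgraph G) (hH : H = (⊤ : G.Subgraph).deleteVerts X)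
    (hne : H.verts.Nonempty)
    (A B : Set V) (hA : A ⊆ H.verts) (hB : B ⊆ H.verts) (hAB : Disjoint A B) :
    ∃ k : ℕ, IsConnector G H A B k ∧
      (min A.ncard B.ncard : ℝ) / (Fintype.card V : ℝ) ^ ((1 : ℝ) / 3) ≤ (k : ℝ) := by
  subst hH
  set H := (⊤ : G.Subgraph).deleteVerts X
  have hAX : Disjoint A X := Set.disjoint_left.2 fun a ha ↦ (hA ha).2
  have hBX : Disjoint B X := Set.disjoint_left.2 fun b hb ↦ (hB hb).2
  have hex : ∃ k, ∃ S, H.spanningCoe.Separates A B S ∧ S.ncard = k :=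
    ⟨_, A, fun a ha b _ h ↦ h.left_mem ha, rfl⟩
  classical
  obtain ⟨S, hS, hSk⟩ := Nat.find_spec hex
  refine ⟨Nat.find hex, (hasLinkage_of_le_ncard_of_separates _ A B _ fun R hR ↦
    Nat.find_min' hex ⟨R, hR, rfl⟩).isConnector hA, ?_⟩
  rw [← hSk]
  have hn : 0 < (Fintype.card V : ℝ) := by
    have : Nonempty V := ⟨hne.some⟩
    exact_mod_cast Fintype.card_pos
  rw [div_le_iff₀' (Real.rpow_pos_of_pos hn _), min_le_iff]
  have hjoin : ∀ Q : G.Subgraph, IsMaxSubdivisionIn M G ⊤ Q → Q ≤ H → Disjoint Q.verts S →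
      ∀ x ∈ Q.verts, ∀ y ∈ Q.verts, H.spanningCoe.JoinedWithin Sᶜ x y :=
    fun Q hQ hQH hQS x hx y hy ↦ (hQ.1.joinedWithin hM hx hy).mono
      (Subgraph.spanningCoe_le_of_le hQH) (Set.subset_compl_iff_disjoint_right.2 hQS)
  by_cases hmeet : ∃ Q : G.Subgraph, IsMaxSubdivisionIn M G ⊤ Q ∧ Q ≤ H ∧
      Disjoint Q.verts S ∧ ∃ a ∈ A, ∃ z ∈ Q.verts, H.spanningCoe.JoinedWithin Sᶜ a z
  · obtain ⟨Q, hQ, hQH, hQS, a, ha, z, hz, haz⟩ := hmeet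
    refine .inr (hXY.ncard_le_mul_ncard hmax hBX fun R hR hRH hRS b hb w hw hbw ↦ ?_)
    obtain ⟨t, htQ, htR⟩ := hpi Q R hQ hR
    exact hS a ha b hb (haz.trans ((hjoin Q hQ hQH hQS z hz t htQ).trans
      ((hjoin R hR hRH hRS t htR w hw).trans hbw.symm)))
  · refine .inl (hXY.ncard_le_mul_ncard hmax hAX fun Q hQ hQH hQS a ha z hz haz ↦ ?_)
    exact hmeet ⟨Q, hQ, hQH, hQS, a, ha, z, hz, haz⟩
end
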